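/- arXiv:q-alg/9612027 — 3 statements merged into one kernel-verified Lean document; each statement's English description precedes it below -/
import Mathlib

section
/- Let λ ∈ ℂ and define on R the operators J¹ = M_{x²}∘D_x + M_{xy}∘D_y − λ·M_x, J² = M_{xy}∘D_x + M_{y²}∘D_y − λ·M_y, J³ = M_y∘D_x, J⁴ = D_x, J⁵ = D_y, J⁶ = M_x∘D_y, J⁷ = M_x∘D_x − (λ/3)·id, J⁸ = M_y∘D_y − (λ/3)·id. For every k ∈ ℕ, the ℂ-subspace of End(R) spanned by all compositions of at most k elements of {J¹, …, J⁸} (the empty composition being the identity) has dimension exactly (k+1)²(k+2)²/4; that is, 4 times its dimension equals (k+1)²(k+2)². -/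
noncomputable section

open MvPolynomial

/-- The bivariate polynomial ring `R = ℂ[x,y]`. -/
abbrev R2 : Type := MvPolynomial (Fin 2) ℂ

/-- The variable `x`. -/
def Xv : R2 := X 0

/-- The variable `y`. -/
def Yv : R2 := X 1

/-- The partial derivative `∂_x` as a `ℂ`-linear endomorphism. -/
def Dx : Module.End ℂ R2 := (pderiv (0 : Fin 2)).toLinearMap

/-- The partial derivative `∂_y` as a `ℂ`-linear endomorphism. -/
def Dy : Module.End ℂ R2 := (pderiv (1 : Fin 2)).toLinearMap

/-- Multiplication by `f` as an endomorphism. -/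
def Mf (f : R2) : Module.End ℂ R2 := LinearMap.mulLeft ℂ f

/-- All compositions (products) of at most `k` elements of `S`; the empty
composition is the identity. -/
def prodsLE (k : ℕ) (S : Set (Module.End ℂ R2)) : Set (Module.End ℂ R2) :=
  {T | ∃ l : List (Module.End ℂ R2), l.length ≤ k ∧ (∀ a ∈ l, a ∈ S) ∧ l.prod = T}

/-- The rectangular module `ℛ_{n,m}`. -/
def Rmod (n m : ℕ) : Submodule ℂ R2 :=
  Submodule.span ℂ {P : R2 | ∃ i j : ℕ, i ≤ n ∧ j ≤ m ∧ P = Xv ^ i * Yv ^ j}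

/-- The triangular module `𝒯ₙ`. -/
def Tmod (n : ℕ) : Submodule ℂ R2 :=
  Submodule.span ℂ {P : R2 | ∃ i j : ℕ, i + j ≤ n ∧ P = Xv ^ i * Yv ^ j}

/-- The staircase module `𝒮^r_{p,q}`. -/
def Smod (r p q : ℕ) : Submodule ℂ R2 :=
  Submodule.span ℂ {P : R2 | ∃ i j : ℕ, i + r * j ≤ p ∧ j ≤ q ∧ P = Xv ^ i * Yv ^ j}

/-- An endomorphism has nonpositive `y`-degree if it maps each monomial `xᵃyᵇ`
into the span of the monomials `x^c y^e` with `e ≤ b`. -/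
def NonposY (T : Module.End ℂ R2) : Prop :=
  ∀ a b : ℕ, T (Xv ^ a * Yv ^ b) ∈
    Submodule.span ℂ {P : R2 | ∃ c e : ℕ, e ≤ b ∧ P = Xv ^ c * Yv ^ e}

/-- `J¹ = M_{x²}∘D_x + M_{xy}∘D_y − a·M_x`. -/
def J1 (a : ℂ) : Module.End ℂ R2 := Mf (Xv ^ 2) * Dx + Mf (Xv * Yv) * Dy - a • Mf Xv

/-- `J² = M_{xy}∘D_x + M_{y²}∘D_y − a·M_y`. -/
def J2 (a : ℂ) : Module.End ℂ R2 := Mf (Xv * Yv) * Dx + Mf (Yv ^ 2) * Dy - a • Mf Yv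

/-- `J³ = M_y∘D_x`. -/
def J3 : Module.End ℂ R2 := Mf Yv * Dx

/-- `J⁴ = D_x`. -/
def J4 : Module.End ℂ R2 := Dx

/-- `J⁵ = D_y`. -/
def J5 : Module.End ℂ R2 := Dy

/-- `J⁶ = M_x∘D_y`. -/
def J6 : Module.End ℂ R2 := Mf Xv * Dy

/-- `J⁷ = M_x∘D_x − (a/3)·id`. -/
def J7 (a : ℂ) : Module.End ℂ R2 := Mf Xv * Dx - (a / 3) • 1

/-- `J⁸ = M_y∘D_y − (a/3)·id`. -/
def J8 (a : ℂ) : Module.End ℂ R2 := Mf Yv * Dy - (a / 3) • 1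

/-!
The operators `J¹, …, J⁸` together with the identity span the same space as the identity together
with the vector fields `xᵢ ∂ⱼ` of `𝔤𝔩₃` acting on functions of `x₀, x₁, x₂` that are homogeneous of
degree `λ`, written in the chart where `x₀ = 1`. By the Leibniz rule, the compositions of at most
`k` such fields have the same span as the normally ordered operators `x ^ α ∂ ^ β` with
`|α| = |β| ≤ k`. The Euler relation `∑ xᵢ ∂ᵢ = λ` removes common factors `x₀ ∂₀`, after which an
operator is determined by the exponents `(a, b)` of `α` and `β` away from `x₀`, both of degree at
most `k`. There are `(n + k).choose k ^ 2` such pairs in `n` affine variables. The operators so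
obtained are independent: a linear relation between those that shift exponents by a given `a - b`
forces one between the falling factorials of the exponents.
-/

section Exponents

variable {σ : Type*}

lemma exists_eq_add_single {a : σ →₀ ℕ} {i : σ} (h : a i ≠ 0) :
    ∃ b : σ →₀ ℕ, a = b + Finsupp.single i 1 :=
  le_iff_exists_add'.mp (Finsupp.single_le_iff.mpr (Nat.one_le_iff_ne_zero.mpr h))

lemma exists_eq_add_single_of_degree_eq_succ {a : σ →₀ ℕ} {n : ℕ} (h : a.degree = n + 1) :
    ∃ (b : σ →₀ ℕ) (i : σ), a = b + Finsupp.single i 1 ∧ b.degree = n := by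
  have ha : a ≠ 0 := by
    rintro rfl
    simp at h
  obtain ⟨i, hi⟩ := Finsupp.ne_iff.mp ha
  obtain ⟨b, rfl⟩ := exists_eq_add_single hi
  exact ⟨b, i, rfl, by simpa using h⟩

lemma degree_eq_none_add_degree_some (α : Option σ →₀ ℕ) :
    α.degree = α none + α.some.degree := by
  induction α using Finsupp.induction_linear with
  | zero => simp
  | add α β hα hβ =>
    simp only [map_add, Finsupp.add_apply, Finsupp.some_add]
    omega
  | single i n => cases i <;> simp

lemma degree_optionElim (n : ℕ) (a : σ →₀ ℕ) : (a.optionElim n).degree = n + a.degree := by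
  simp [degree_eq_none_add_degree_some]

variable [Fintype σ]

lemma natCard_degree_eq (n : ℕ) :
    Nat.card {a : σ →₀ ℕ // a.degree = n} = (Fintype.card σ).multichoose n := by
  classical
  rw [← Nat.card_eq_fintype_card, ← Sym.natCard_sym_eq_multichoose]
  exact Nat.card_congr (Sym.equivNatSum σ n).symm

lemma natCard_degree_le (k : ℕ) :
    Nat.card {a : σ →₀ ℕ // a.degree ≤ k} = (Fintype.card σ + k).choose k := by
  let homogenize : {a : σ →₀ ℕ // a.degree ≤ k} ≃ {α : Option σ →₀ ℕ // α.degree = k} :=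
    { toFun a := ⟨a.1.optionElim (k - a.1.degree), by
        rw [degree_optionElim, Nat.sub_add_cancel a.2]⟩
      invFun α := ⟨α.1.some, by
        have := degree_eq_none_add_degree_some α.1
        omega⟩
      left_inv a := by simp
      right_inv α := by
        have h := degree_eq_none_add_degree_some α.1
        have hnone : k - α.1.some.degree = α.1 none := by omega
        simp [hnone] }
  rw [Nat.card_congr homogenize, natCard_degree_eq, Fintype.card_option, Nat.multichoose_eq]
  congr 1
  omega

end Exponents

section DescPochhammer

variable {R : Type*} [CommRing R]

lemma exists_forall_descPochhammer_eval_ne_zero [IsDomain R] [CharZero R] (c : R) :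
    ∃ N : ℕ, ∀ n q : ℕ, N ≤ n → (descPochhammer R q).eval (c - n) ≠ 0 := by
  obtain ⟨N, hN⟩ : ∃ N : ℕ, ∀ n : ℕ, N ≤ n → c ≠ n := by
    by_cases hc : ∃ m : ℕ, c = m
    · obtain ⟨m, rfl⟩ := hc
      exact ⟨m + 1, fun n hn h => by have := Nat.cast_injective h; omega⟩
    · exact ⟨0, fun n _ h => hc ⟨n, h⟩⟩
  refine ⟨N, fun n q hn => ?_⟩
  rw [descPochhammer_eval_eq_prod_range, Finset.prod_ne_zero_iff]
  intro j _ hj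
  refine hN (n + j) (by omega) ?_
  push_cast
  linear_combination hj

lemma exists_forall_descPochhammer_eval_sub_degree_ne_zero {σ : Type*} [IsDomain R]
    [CharZero R] (lam : R) (q : ℕ) (hσ : q = 0 ∨ Nonempty σ) :
    ∃ N : ℕ, ∀ s : σ →₀ ℕ, (∀ i, N ≤ s i) →
      (descPochhammer R q).eval (lam - s.degree) ≠ 0 := by
  obtain ⟨N, hN⟩ := exists_forall_descPochhammer_eval_ne_zero lam
  refine ⟨N, fun s hs => ?_⟩
  rcases hσ with rfl | ⟨⟨i⟩⟩
  · simp
  · exact hN _ _ ((hs i).trans (Finsupp.le_degree i s))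

variable {σ : Type*} [Fintype σ]

/-- The falling-factorial polynomial `∏ i, X i (X i - 1) ⋯ (X i - b i + 1)`, whose value at an
exponent `s` is the coefficient of `∂ ^ b` on the monomial `x ^ s`. -/
def descPochhammerProd (R : Type*) [CommRing R] (b : σ →₀ ℕ) : MvPolynomial σ R :=
  ∏ i, Polynomial.aeval (X i) (descPochhammer R (b i))

lemma eval_natCast_descPochhammerProd (b s : σ →₀ ℕ) :
    eval (fun i => (s i : R)) (descPochhammerProd R b) =
      ∏ i, ((s i).descFactorial (b i) : R) := by
  rw [descPochhammerProd, map_prod]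
  refine Finset.prod_congr rfl fun i _ => ?_
  have h := Polynomial.aeval_algHom_apply (aeval fun i => (s i : R)) (X i) (descPochhammer R (b i))
  rw [aeval_X, Polynomial.coe_aeval_eq_eval, descPochhammer_eval_eq_descFactorial] at h
  exact h.symm

lemma linearIndependent_descPochhammerProd [IsDomain R] [CharZero R] :
    LinearIndependent R (descPochhammerProd (σ := σ) R) := by
  classical
  rw [linearIndependent_iff']
  intro S g hg
  by_contra! hne
  obtain ⟨b₀, hb₀S, hb₀⟩ := hne
  obtain ⟨b, hb⟩ := (S.filter (g · ≠ 0)).exists_minimal ⟨b₀, by simp [hb₀S, hb₀]⟩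
  obtain ⟨hbS, hgb⟩ := Finset.mem_filter.mp hb.prop
  have hvanish : ∀ c ∈ S, c ≠ b → g c * ∏ i, ((b i).descFactorial (c i) : R) = 0 := by
    intro c hcS hcb
    by_cases hgc : g c = 0
    · rw [hgc, zero_mul]
    have hcb' : ¬ c ≤ b := fun h =>
      hcb (hb.eq_of_le (Finset.mem_filter.mpr ⟨hcS, hgc⟩) h)
    obtain ⟨i, hi⟩ : ∃ i, b i < c i := by simpa [Finsupp.le_def] using hcb'
    rw [Finset.prod_eq_zero (Finset.mem_univ i), mul_zero]
    rw [Nat.descFactorial_eq_zero_iff_lt.mpr hi, Nat.cast_zero]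
  have heval := congrArg (eval fun i => (b i : R)) hg
  simp only [map_sum, smul_eval, eval_natCast_descPochhammerProd, map_zero] at heval
  rw [Finset.sum_eq_single_of_mem b hbS hvanish] at heval
  refine mul_ne_zero hgb (Finset.prod_ne_zero_iff.mpr fun i _ => ?_) heval
  rw [Nat.descFactorial_self]
  exact_mod_cast (b i).factorial_ne_zero

end DescPochhammer

section NormalOrderedOperators

variable {R σ : Type*} [CommRing R]

lemma end_ext_monomial {S T : Module.End R (MvPolynomial σ R)}
    (h : ∀ s, S (monomial s 1) = T (monomial s 1)) : S = T :=
  MvPolynomial.linearMap_ext fun s => LinearMap.ext_ring (h s)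

/-- Multiplication by a homogeneous coordinate in the chart where the coordinate `none` is `1`. -/
def homCoord : Option σ → Module.End R (MvPolynomial σ R)
  | none => 1
  | some i => LinearMap.mulLeft R (X i)

lemma homCoord_monomial (i : Option σ) (s : σ →₀ ℕ) :
    homCoord i (monomial s (1 : R)) = monomial (s + (Finsupp.single i 1).some) 1 := by
  cases i with
  | none => simp [homCoord]
  | some i => simp [homCoord, X, monomial_mul, add_comm]

/-- The exponents of the homogeneous monomial of degree `lam` that restricts to `x ^ s`. The
exponent of the coordinate `none` need not be a natural number. -/
def homExponent (lam : R) (s : σ →₀ ℕ) : Option σ → R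
  | none => lam - s.degree
  | some i => s i

lemma homExponent_sub_add (lam : R) {α β : Option σ →₀ ℕ} {s : σ →₀ ℕ} (hβ : β.some ≤ s)
    (h : α.degree = β.degree) (j : Option σ) :
    homExponent lam (s - β.some + α.some) j = homExponent lam s j - β j + α j := by
  cases j with
  | none =>
    have hs : ((s - β.some).degree : R) + β.some.degree = s.degree := by
      rw [← Nat.cast_add, ← map_add, tsub_add_cancel_of_le hβ]
    have hαβ : (α none : R) + α.some.degree = β none + β.some.degree := by
      rw [← Nat.cast_add, ← Nat.cast_add, ← degree_eq_none_add_degree_some,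
        ← degree_eq_none_add_degree_some, h]
    simp only [homExponent, map_add, Nat.cast_add]
    linear_combination -hs - hαβ
  | some j =>
    have hj : β (some j) ≤ s j := hβ j
    simp [homExponent, Nat.cast_sub hj]

variable [Fintype σ]

/-- The partial derivative along a homogeneous coordinate, acting on homogeneous functions of
degree `lam` restricted to the chart where the coordinate `none` is `1`. On such functions the Euler
relation expresses the derivative along `none` through the others. -/
def homDeriv (lam : R) : Option σ → Module.End R (MvPolynomial σ R)
  | none => lam • 1 - ∑ i, LinearMap.mulLeft R (X i) * (pderiv i).toLinearMap
  | some i => (pderiv i).toLinearMap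

/-- The action of the matrix unit `E i j` of `𝔤𝔩 (n + 1)` by the vector field `xᵢ ∂ⱼ` on homogeneous
functions of degree `lam`. -/
def glOp (lam : R) (i j : Option σ) : Module.End R (MvPolynomial σ R) :=
  homCoord i * homDeriv lam j

lemma sum_homExponent (lam : R) (s : σ →₀ ℕ) : ∑ i, homExponent lam s i = lam := by
  simp [Fintype.sum_option, homExponent, Finsupp.degree_eq_sum]

lemma homDeriv_monomial (lam : R) (j : Option σ) (s : σ →₀ ℕ) :
    homDeriv lam j (monomial s 1) =
      homExponent lam s j • monomial (s - (Finsupp.single j 1).some) 1 := by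
  cases j with
  | none =>
    have hEuler (i : σ) : X i * pderiv i (monomial s (1 : R)) = (s i : R) • monomial s 1 := by
      rw [X_mul_pderiv_monomial, Nat.cast_smul_eq_nsmul]
    simp [homDeriv, homExponent, hEuler, Finsupp.degree_eq_sum, sub_smul, Finset.sum_smul,
      -pderiv_monomial]
  | some j => simp [homDeriv, homExponent, pderiv_monomial, smul_monomial]

/-- The factor by which the iterated homogeneous derivative `∂ ^ β` multiplies the homogeneous
monomial of degree `lam` that restricts to `x ^ s`. -/
def homDescPochhammer (lam : R) (β : Option σ →₀ ℕ) (s : σ →₀ ℕ) : R :=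
  ∏ i, (descPochhammer R (β i)).eval (homExponent lam s i)

lemma homDescPochhammer_eq_mul (lam : R) (β : Option σ →₀ ℕ) (s : σ →₀ ℕ) :
    homDescPochhammer lam β s =
      (descPochhammer R (β none)).eval (lam - s.degree) *
        ∏ i, ((s i).descFactorial (β.some i) : R) := by
  simp [homDescPochhammer, Fintype.prod_option, homExponent, descPochhammer_eval_eq_descFactorial]

lemma homDescPochhammer_eq_zero (lam : R) {β : Option σ →₀ ℕ} {s : σ →₀ ℕ} (h : ¬ β.some ≤ s) :
    homDescPochhammer lam β s = 0 := by
  obtain ⟨i, hi⟩ : ∃ i, s i < β.some i := by simpa only [Finsupp.le_def, not_forall, not_le] using h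
  rw [homDescPochhammer_eq_mul, Finset.prod_eq_zero (Finset.mem_univ i), mul_zero]
  rw [Nat.descFactorial_eq_zero_iff_lt.mpr hi, Nat.cast_zero]

lemma homDescPochhammer_add_single (lam : R) (β : Option σ →₀ ℕ) (s : σ →₀ ℕ) (j : Option σ) :
    homDescPochhammer lam (β + Finsupp.single j 1) s =
      homDescPochhammer lam β s * (homExponent lam s j - β j) := by
  classical
  have hrest : ∏ i ∈ {j}ᶜ, (descPochhammer R ((β + Finsupp.single j 1 : Option σ →₀ ℕ) i)).eval
        (homExponent lam s i) =
      ∏ i ∈ {j}ᶜ, (descPochhammer R (β i)).eval (homExponent lam s i) := by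
    refine Finset.prod_congr rfl fun i hi => ?_
    have hij : i ≠ j := by simpa using hi
    rw [Finsupp.add_apply, Finsupp.single_eq_of_ne hij, add_zero]
  rw [homDescPochhammer, homDescPochhammer, Fintype.prod_eq_mul_prod_compl j, hrest,
    Fintype.prod_eq_mul_prod_compl j, Finsupp.add_apply, Finsupp.single_eq_same,
    descPochhammer_succ_eval]
  ring

/-- The normally ordered operator `x ^ α ∂ ^ β` in homogeneous coordinates, on homogeneous functions
of degree `lam`; it preserves the degree only if `α.degree = β.degree`. Where the exponent
`s - β.some` is truncated, the coefficient vanishes. -/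
def normalOp (lam : R) (α β : Option σ →₀ ℕ) : Module.End R (MvPolynomial σ R) :=
  (basisMonomials σ R).constr R fun s =>
    homDescPochhammer lam β s • monomial (s - β.some + α.some) 1

lemma normalOp_monomial (lam : R) (α β : Option σ →₀ ℕ) (s : σ →₀ ℕ) :
    normalOp lam α β (monomial s 1) =
      homDescPochhammer lam β s • monomial (s - β.some + α.some) 1 := by
  have h := (basisMonomials σ R).constr_basis R (fun s =>
    homDescPochhammer lam β s • (monomial (s - β.some + α.some) (1 : R))) s
  rwa [coe_basisMonomials] at h

lemma normalOp_zero_zero (lam : R) : normalOp lam (0 : Option σ →₀ ℕ) 0 = 1 :=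
  end_ext_monomial fun s => by simp [normalOp_monomial, homDescPochhammer]

lemma homCoord_mul_normalOp (lam : R) (i : Option σ) (α β : Option σ →₀ ℕ) :
    homCoord i * normalOp lam α β = normalOp lam (α + Finsupp.single i 1) β :=
  end_ext_monomial fun s => by
    simp only [Module.End.mul_apply, normalOp_monomial, map_smul, homCoord_monomial,
      Finsupp.some_add, add_assoc]

lemma normalOp_add_single_monomial (lam : R) (α β : Option σ →₀ ℕ) (j : Option σ) (s : σ →₀ ℕ) :
    normalOp lam α (β + Finsupp.single j 1) (monomial s 1) =
      (homDescPochhammer lam β s * (homExponent lam s j - β j)) •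
        monomial (s - β.some + α.some - (Finsupp.single j 1).some) 1 := by
  rw [normalOp_monomial, ← homDescPochhammer_add_single]
  by_cases hs : (β + Finsupp.single j 1).some ≤ s
  · rw [Finsupp.some_add] at hs ⊢
    rw [← tsub_tsub, tsub_add_eq_add_tsub (le_tsub_of_add_le_left hs)]
  · simp only [homDescPochhammer_eq_zero lam hs, zero_smul]

lemma natCast_smul_normalOp_sub_single_monomial (lam : R) (α β : Option σ →₀ ℕ) (j : Option σ)
    (s : σ →₀ ℕ) :
    (α j : R) • normalOp lam (α - Finsupp.single j 1) β (monomial s 1) =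
      (homDescPochhammer lam β s * α j) •
        monomial (s - β.some + α.some - (Finsupp.single j 1).some) 1 := by
  rw [normalOp_monomial, smul_smul, mul_comm]
  by_cases hj : α j = 0
  · simp only [hj, Nat.cast_zero, mul_zero, zero_smul]
  · obtain ⟨γ, rfl⟩ := exists_eq_add_single hj
    rw [Finsupp.some_add, ← add_assoc, add_tsub_cancel_right, add_tsub_cancel_right]

lemma homDeriv_mul_normalOp (lam : R) (j : Option σ) {α β : Option σ →₀ ℕ}
    (h : α.degree = β.degree) :
    homDeriv lam j * normalOp lam α β =
      normalOp lam α (β + Finsupp.single j 1) +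
        (α j : R) • normalOp lam (α - Finsupp.single j 1) β := by
  refine end_ext_monomial fun s => ?_
  rw [LinearMap.add_apply, LinearMap.smul_apply, normalOp_add_single_monomial,
    natCast_smul_normalOp_sub_single_monomial, ← add_smul, ← mul_add, Module.End.mul_apply,
    normalOp_monomial, map_smul, homDeriv_monomial, smul_smul]
  by_cases hβ : β.some ≤ s
  · rw [homExponent_sub_add lam hβ h]
  · simp only [homDescPochhammer_eq_zero lam hβ, zero_mul, zero_smul]

lemma glOp_mul_normalOp (lam : R) (i j : Option σ) {α β : Option σ →₀ ℕ}
    (h : α.degree = β.degree) :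
    glOp lam i j * normalOp lam α β =
      normalOp lam (α + Finsupp.single i 1) (β + Finsupp.single j 1) +
        (α j : R) • normalOp lam (α - Finsupp.single j 1 + Finsupp.single i 1) β := by
  rw [glOp, mul_assoc, homDeriv_mul_normalOp lam j h, mul_add, mul_smul_comm,
    homCoord_mul_normalOp, homCoord_mul_normalOp]

lemma sum_normalOp_add_single (lam : R) (α β : Option σ →₀ ℕ) :
    ∑ i, normalOp lam (α + Finsupp.single i 1) (β + Finsupp.single i 1) =
      (lam - β.degree) • normalOp lam α β := by
  refine end_ext_monomial fun s => ?_
  have hterm (i : Option σ) :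
      normalOp lam (α + Finsupp.single i 1) (β + Finsupp.single i 1) (monomial s 1) =
        (homExponent lam s i - β i) • normalOp lam α β (monomial s 1) := by
    rw [normalOp_monomial, normalOp_monomial, smul_smul, mul_comm, ← homDescPochhammer_add_single]
    by_cases hs : (β + Finsupp.single i 1).some ≤ s
    · rw [Finsupp.some_add] at hs
      rw [Finsupp.some_add, Finsupp.some_add, add_comm α.some, ← add_assoc, ← tsub_tsub,
        tsub_add_cancel_of_le (le_tsub_of_add_le_left hs)]
    · simp only [homDescPochhammer_eq_zero lam hs, zero_smul]
  rw [LinearMap.sum_apply, Finset.sum_congr rfl fun i _ => hterm i, ← Finset.sum_smul,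
    Finset.sum_sub_distrib, sum_homExponent, ← Nat.cast_sum, ← Finsupp.degree_eq_sum,
    LinearMap.smul_apply]

end NormalOrderedOperators

section Filtration

variable {R : Type*} (σ : Type*) [CommRing R] [Fintype σ]

/-- The span of the identity and the image of `𝔤𝔩 (n + 1)`. Its `k`-th power is spanned by the
compositions of at most `k` of the operators `glOp lam i j`. -/
def glSpan (lam : R) : Submodule R (Module.End R (MvPolynomial σ R)) :=
  Submodule.span R (insert 1 (Set.range (Function.uncurry (glOp lam))))

/-- The span of the normally ordered operators of order at most `k` that preserve the degree of
homogeneous functions. -/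
def normalOpSpan (lam : R) (k : ℕ) : Submodule R (Module.End R (MvPolynomial σ R)) :=
  Submodule.span R {T | ∃ α β : Option σ →₀ ℕ,
    α.degree = β.degree ∧ β.degree ≤ k ∧ normalOp lam α β = T}

variable {σ}

lemma normalOp_mem_normalOpSpan (lam : R) {k : ℕ} {α β : Option σ →₀ ℕ}
    (h : α.degree = β.degree) (hk : β.degree ≤ k) : normalOp lam α β ∈ normalOpSpan σ lam k :=
  Submodule.subset_span ⟨α, β, h, hk, rfl⟩

lemma one_mem_glSpan (lam : R) : 1 ∈ glSpan σ lam :=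
  Submodule.subset_span (Set.mem_insert _ _)

lemma glOp_mem_glSpan (lam : R) (i j : Option σ) : glOp lam i j ∈ glSpan σ lam :=
  Submodule.subset_span (Set.mem_insert_of_mem _ ⟨(i, j), rfl⟩)

lemma natCast_smul_normalOp_sub_add_mem (lam : R)
    (S : Submodule R (Module.End R (MvPolynomial σ R))) {α β : Option σ →₀ ℕ}
    (h : α.degree = β.degree) (i j : Option σ)
    (hS : ∀ γ : Option σ →₀ ℕ, γ.degree = β.degree → normalOp lam γ β ∈ S) :
    (α j : R) • normalOp lam (α - Finsupp.single j 1 + Finsupp.single i 1) β ∈ S := by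
  by_cases hj : α j = 0
  · simp [hj]
  · obtain ⟨γ, rfl⟩ := exists_eq_add_single hj
    rw [add_tsub_cancel_right]
    exact S.smul_mem _ (hS _ (by simpa using h))

lemma glSpan_mul_normalOpSpan_le (lam : R) (k : ℕ) :
    glSpan σ lam * normalOpSpan σ lam k ≤ normalOpSpan σ lam (k + 1) := by
  rw [glSpan, normalOpSpan, Submodule.span_mul_span, Submodule.span_le]
  rintro _ ⟨_, rfl | ⟨⟨i, j⟩, rfl⟩, _, ⟨α, β, h, hk, rfl⟩, rfl⟩
  · simpa using normalOp_mem_normalOpSpan lam h (hk.trans k.le_succ)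
  · change glOp lam i j * normalOp lam α β ∈ normalOpSpan σ lam (k + 1)
    rw [glOp_mul_normalOp lam i j h]
    refine add_mem (normalOp_mem_normalOpSpan lam (by simp [h]) (by simpa using hk)) ?_
    exact natCast_smul_normalOp_sub_add_mem lam _ h i j fun γ hγ =>
      normalOp_mem_normalOpSpan lam hγ (hk.trans k.le_succ)

lemma glSpan_pow_le_normalOpSpan (lam : R) (k : ℕ) :
    glSpan σ lam ^ k ≤ normalOpSpan σ lam k := by
  induction k with
  | zero =>
    rw [pow_zero, Submodule.one_le, ← normalOp_zero_zero lam]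
    exact normalOp_mem_normalOpSpan lam rfl (by simp)
  | succ k ih =>
    rw [pow_succ']
    exact (mul_le_mul_right ih _).trans (glSpan_mul_normalOpSpan_le lam k)

lemma glSpan_pow_mono (lam : R) : Monotone (glSpan σ lam ^ · : ℕ → Submodule R _) :=
  fun _ _ h => pow_le_pow_right' (Submodule.one_le.mpr (one_mem_glSpan lam)) h

lemma normalOp_mem_glSpan_pow (lam : R) {n : ℕ} {α β : Option σ →₀ ℕ}
    (h : α.degree = β.degree) (hn : β.degree = n) : normalOp lam α β ∈ glSpan σ lam ^ n := by
  induction n generalizing α β with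
  | zero =>
    rw [hn, Finsupp.degree_eq_zero_iff] at h
    rw [Finsupp.degree_eq_zero_iff] at hn
    rw [h, hn, normalOp_zero_zero, pow_zero]
    exact Submodule.one_le.mp le_rfl
  | succ n ih =>
    obtain ⟨α, i, rfl, hα⟩ := exists_eq_add_single_of_degree_eq_succ (h.trans hn)
    obtain ⟨β, j, rfl, hβ⟩ := exists_eq_add_single_of_degree_eq_succ hn
    have hαβ : α.degree = β.degree := hα.trans hβ.symm
    rw [eq_sub_of_add_eq (glOp_mul_normalOp lam i j hαβ).symm]
    refine sub_mem ?_ (glSpan_pow_mono lam n.le_succ ?_)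
    · rw [pow_succ']
      exact Submodule.mul_mem_mul (glOp_mem_glSpan lam i j) (ih hαβ hβ)
    · exact natCast_smul_normalOp_sub_add_mem lam _ hαβ i j fun γ hγ => ih hγ hβ

theorem glSpan_pow_eq_normalOpSpan (lam : R) (k : ℕ) :
    glSpan σ lam ^ k = normalOpSpan σ lam k := by
  refine le_antisymm (glSpan_pow_le_normalOpSpan lam k) (Submodule.span_le.mpr ?_)
  rintro _ ⟨α, β, h, hk, rfl⟩
  exact glSpan_pow_mono lam hk (normalOp_mem_glSpan_pow lam h rfl)

/-- The normally ordered operators `x ^ α ∂ ^ β` for which the coordinate `none` occurs in at most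
one of `α` and `β`, indexed by the restrictions of `α` and `β` to the other coordinates. One of the
two truncated differences is `0`. -/
def reducedOp (lam : R) (p : (σ →₀ ℕ) × (σ →₀ ℕ)) : Module.End R (MvPolynomial σ R) :=
  normalOp lam (p.1.optionElim (p.2.degree - p.1.degree))
    (p.2.optionElim (p.1.degree - p.2.degree))

lemma normalOp_eq_reducedOp (lam : R) {α β : Option σ →₀ ℕ} (h : α.degree = β.degree)
    (h₀ : α none = 0 ∨ β none = 0) : normalOp lam α β = reducedOp lam (α.some, β.some) := by
  have hα := degree_eq_none_add_degree_some α
  have hβ := degree_eq_none_add_degree_some β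
  have hα₀ : β.some.degree - α.some.degree = α none := by omega
  have hβ₀ : α.some.degree - β.some.degree = β none := by omega
  rw [reducedOp, hα₀, hβ₀, Finsupp.optionElim_some, Finsupp.optionElim_some]

variable (σ) in
/-- The span of the reduced normally ordered operators of order at most `k`. -/
def reducedOpSpan (lam : R) (k : ℕ) : Submodule R (Module.End R (MvPolynomial σ R)) :=
  Submodule.span R (Set.range fun p : {a : σ →₀ ℕ // a.degree ≤ k} × {b : σ →₀ ℕ // b.degree ≤ k} =>
    reducedOp lam (p.1, p.2))

lemma reducedOp_mem_reducedOpSpan (lam : R) {k : ℕ} {a b : σ →₀ ℕ} (ha : a.degree ≤ k)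
    (hb : b.degree ≤ k) : reducedOp lam (a, b) ∈ reducedOpSpan σ lam k :=
  Submodule.subset_span ⟨(⟨a, ha⟩, ⟨b, hb⟩), rfl⟩

lemma normalOp_mem_reducedOpSpan_of_none_eq_zero (lam : R) {k : ℕ} {α β : Option σ →₀ ℕ}
    (h : α.degree = β.degree) (hk : β.degree ≤ k) (h₀ : α none = 0 ∨ β none = 0) :
    normalOp lam α β ∈ reducedOpSpan σ lam k := by
  have hα := degree_eq_none_add_degree_some α
  have hβ := degree_eq_none_add_degree_some β
  rw [normalOp_eq_reducedOp lam h h₀]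
  exact reducedOp_mem_reducedOpSpan lam (by omega) (by omega)

lemma normalOp_mem_reducedOpSpan (lam : R) {k : ℕ} {α β : Option σ →₀ ℕ}
    (h : α.degree = β.degree) (hk : β.degree ≤ k) :
    normalOp lam α β ∈ reducedOpSpan σ lam k := by
  induction hn : β none generalizing α β with
  | zero => exact normalOp_mem_reducedOpSpan_of_none_eq_zero lam h hk (.inr hn)
  | succ n ih =>
    by_cases hα : α none = 0
    · exact normalOp_mem_reducedOpSpan_of_none_eq_zero lam h hk (.inl hα)
    obtain ⟨α, rfl⟩ := exists_eq_add_single hα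
    obtain ⟨β, rfl⟩ := exists_eq_add_single (hn.trans_ne n.succ_ne_zero)
    have hEuler := sum_normalOp_add_single lam α β
    simp only [map_add, Finsupp.degree_single, add_left_inj] at h hk
    simp only [Finsupp.add_apply, Finsupp.single_eq_same, add_left_inj] at hn
    rw [Fintype.sum_option] at hEuler
    rw [eq_sub_of_add_eq hEuler]
    refine sub_mem (Submodule.smul_mem _ _ (ih h (by omega) hn)) (sum_mem fun i _ => ?_)
    exact ih (by simpa using h) (by simpa using hk) (by simpa using hn)

theorem normalOpSpan_eq_reducedOpSpan (lam : R) (k : ℕ) :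
    normalOpSpan σ lam k = reducedOpSpan σ lam k := by
  refine le_antisymm (Submodule.span_le.mpr ?_) (Submodule.span_le.mpr ?_)
  · rintro _ ⟨α, β, h, hk, rfl⟩
    exact normalOp_mem_reducedOpSpan lam h hk
  · rintro _ ⟨⟨⟨a, ha⟩, ⟨b, hb⟩⟩, rfl⟩
    refine normalOp_mem_normalOpSpan lam ?_ ?_ <;> simp only [degree_optionElim] <;> omega

lemma reducedOp_monomial (lam : R) (p : (σ →₀ ℕ) × (σ →₀ ℕ)) (s : σ →₀ ℕ) :
    reducedOp lam p (monomial s 1) =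
      ((descPochhammer R (p.1.degree - p.2.degree)).eval (lam - s.degree) *
        eval (fun i => (s i : R)) (descPochhammerProd R p.2)) • monomial (s - p.2 + p.1) 1 := by
  rw [reducedOp, normalOp_monomial, homDescPochhammer_eq_mul, eval_natCast_descPochhammerProd]
  simp only [Finsupp.some_optionElim, Finsupp.optionElim_apply_none]

/-- Comparing coefficients of `x ^ (s - b + a)` in the images of `x ^ s` singles out the operators
`reducedOp lam (a', b')` with `a' - b' = a - b`, which share the factor in the coordinate `none`. -/
lemma descPochhammer_eval_mul_eval_sum_eq_zero [DecidableEq σ] (lam : R)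
    {S : Finset ((σ →₀ ℕ) × (σ →₀ ℕ))} {g : (σ →₀ ℕ) × (σ →₀ ℕ) → R}
    (hg : ∑ p ∈ S, g p • reducedOp lam p = 0) {a b s : σ →₀ ℕ} (hb : b ≤ s)
    (hS : ∀ p ∈ S, p.2 ≤ s) :
    (descPochhammer R (a.degree - b.degree)).eval (lam - s.degree) *
      eval (fun i => (s i : R))
        (∑ p ∈ S with p.1 + b = a + p.2, g p • descPochhammerProd R p.2) = 0 := by
  have hcoeff := congrArg (coeff (s - b + a)) (LinearMap.congr_fun hg (monomial s 1))
  rw [LinearMap.sum_apply, coeff_sum, LinearMap.zero_apply, coeff_zero] at hcoeff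
  rw [map_sum, Finset.mul_sum, Finset.sum_filter]
  refine (Finset.sum_congr rfl fun p hp => ?_).trans hcoeff
  have hiff : s - p.2 + p.1 = s - b + a ↔ p.1 + b = a + p.2 := by
    simp only [Finsupp.ext_iff, Finsupp.add_apply, Finsupp.tsub_apply]
    refine forall_congr' fun i => ?_
    have := hb i
    have := hS p hp i
    omega
  rw [LinearMap.smul_apply, reducedOp_monomial, coeff_smul, coeff_smul, coeff_monomial]
  simp only [hiff]
  split_ifs with h
  · have hdeg := congrArg Finsupp.degree h
    simp only [map_add] at hdeg
    rw [show p.1.degree - p.2.degree = a.degree - b.degree by omega, smul_eval]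
    simp only [smul_eq_mul, mul_one]
    ring
  · simp

lemma sum_smul_descPochhammerProd_eq_zero [DecidableEq σ] [IsDomain R] [CharZero R] (lam : R)
    {S : Finset ((σ →₀ ℕ) × (σ →₀ ℕ))} {g : (σ →₀ ℕ) × (σ →₀ ℕ) → R}
    (hg : ∑ p ∈ S, g p • reducedOp lam p = 0) (a b : σ →₀ ℕ) :
    ∑ p ∈ S with p.1 + b = a + p.2, g p • descPochhammerProd R p.2 = 0 := by
  have hσ : a.degree - b.degree = 0 ∨ Nonempty σ := by
    rcases isEmpty_or_nonempty σ with h | h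
    · simp [Subsingleton.elim a b]
    · exact .inr h
  obtain ⟨N, hN⟩ := exists_forall_descPochhammer_eval_sub_degree_ne_zero lam _ hσ
  let M : σ →₀ ℕ := Finsupp.equivFunOnFinite.symm (fun _ => N) + b + ∑ p ∈ S, p.2
  have hinf (i : σ) : ((Nat.cast : ℕ → R) '' Set.Ici (M i)).Infinite :=
    (Set.Ici_infinite _).image Nat.cast_injective.injOn
  refine MvPolynomial.funext_set _ hinf fun x hx => ?_
  choose t ht htx using fun i => hx i (Set.mem_univ i)
  obtain rfl : (fun i => (t i : R)) = x := funext htx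
  let s : σ →₀ ℕ := Finsupp.equivFunOnFinite.symm t
  have hMs : M ≤ s := ht
  have hNs (i : σ) : N ≤ s i := le_trans (by simp [M, add_assoc]) (hMs i)
  have hbs : b ≤ s := le_trans (le_add_right le_add_self) hMs
  have hSs : ∀ p ∈ S, p.2 ≤ s := fun p hp =>
    (Finset.single_le_sum (f := Prod.snd) (fun _ _ => zero_le) hp).trans
      (le_add_self.trans hMs)
  rw [map_zero]
  exact (mul_eq_zero.mp (descPochhammer_eval_mul_eval_sum_eq_zero lam hg hbs hSs)).resolve_left
    (hN s hNs)

theorem linearIndependent_reducedOp [IsDomain R] [CharZero R] (lam : R) :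
    LinearIndependent R (reducedOp (σ := σ) lam) := by
  classical
  rw [linearIndependent_iff']
  intro S g hg p hp
  let F : Finset ((σ →₀ ℕ) × (σ →₀ ℕ)) := {q ∈ S | q.1 + p.2 = p.1 + q.2}
  have hinj : Function.Injective fun q : F => q.1.2 := by
    rintro ⟨⟨a, b⟩, hq⟩ ⟨⟨a', b'⟩, hq'⟩ (rfl : b = b')
    have h := (Finset.mem_filter.mp hq).2.trans (Finset.mem_filter.mp hq').2.symm
    simpa using h
  have hF : LinearIndepOn R (fun q : (σ →₀ ℕ) × (σ →₀ ℕ) => descPochhammerProd R q.2)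
      (F : Set ((σ →₀ ℕ) × (σ →₀ ℕ))) :=
    linearIndependent_descPochhammerProd.comp (fun q : F => q.1.2) hinj
  exact linearIndepOn_finset_iff.mp hF g (sum_smul_descPochhammerProd_eq_zero lam hg p.1 p.2) p
    (Finset.mem_filter.mpr ⟨hp, rfl⟩)

theorem finrank_reducedOpSpan [IsDomain R] [CharZero R] (lam : R) (k : ℕ) :
    Module.finrank R (reducedOpSpan σ lam k) = (Fintype.card σ + k).choose k ^ 2 := by
  have hfin : Finite {a : σ →₀ ℕ // a.degree ≤ k} := Finsupp.finite_of_degree_le k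
  have := Fintype.ofFinite {a : σ →₀ ℕ // a.degree ≤ k}
  have hindep := (linearIndependent_reducedOp (σ := σ) lam).comp
    (fun p : {a : σ →₀ ℕ // a.degree ≤ k} × {b : σ →₀ ℕ // b.degree ≤ k} => (p.1.1, p.2.1))
    (Subtype.val_injective.prodMap Subtype.val_injective)
  rw [reducedOpSpan]
  refine (finrank_span_eq_card hindep).trans ?_
  rw [Fintype.card_prod, ← Nat.card_eq_fintype_card, natCard_degree_le, sq]

variable (σ) in
theorem stmt7_general [IsDomain R] [CharZero R] (lam : R) (k : ℕ) :
    Module.finrank R ↥(glSpan σ lam ^ k) = (Fintype.card σ + k).choose k ^ 2 := by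
  rw [glSpan_pow_eq_normalOpSpan, normalOpSpan_eq_reducedOpSpan, finrank_reducedOpSpan]

end Filtration

section PlaneGenerators

open scoped Pointwise

lemma prodsLE_eq_pow (k : ℕ) (S : Set (Module.End ℂ R2)) : prodsLE k S = insert 1 S ^ k := by
  induction k with
  | zero =>
    ext T
    simp only [prodsLE, Nat.le_zero, List.length_eq_zero_iff, pow_zero, Set.mem_one]
    exact ⟨by rintro ⟨l, rfl, -, rfl⟩; rfl, by rintro rfl; exact ⟨[], by simp⟩⟩
  | succ k ih =>
    rw [pow_succ', ← ih]
    ext T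
    rw [Set.mem_mul]
    constructor
    · rintro ⟨l, hl, hS, rfl⟩
      cases l with
      | nil => exact ⟨1, .inl rfl, 1, ⟨[], by simp⟩, one_mul 1⟩
      | cons A l =>
        rw [List.forall_mem_cons] at hS
        exact ⟨A, .inr hS.1, l.prod, ⟨l, Nat.le_of_succ_le_succ hl, hS.2, rfl⟩,
          List.prod_cons.symm⟩
    · rintro ⟨A, rfl | hA, _, ⟨l, hl, hS, rfl⟩, rfl⟩
      · exact ⟨l, hl.trans k.le_succ, hS, (one_mul _).symm⟩
      · exact ⟨A :: l, Nat.succ_le_succ hl, List.forall_mem_cons.mpr ⟨hA, hS⟩, List.prod_cons⟩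

lemma Mf_mul (f g : R2) : Mf (f * g) = Mf f * Mf g :=
  LinearMap.mulLeft_mul ..

lemma homDeriv_none_eq (lam : ℂ) :
    homDeriv (σ := Fin 2) lam none = lam • 1 - (Mf Xv * Dx + Mf Yv * Dy) := by
  rw [homDeriv, Fin.sum_univ_two]
  rfl

lemma J1_eq_neg_glOp (lam : ℂ) : J1 lam = -glOp lam (some 0) none := by
  change _ = -(Mf Xv * homDeriv lam none)
  rw [J1, homDeriv_none_eq, sq, Mf_mul, Mf_mul, mul_sub, mul_smul_comm, mul_one]
  noncomm_ring

lemma J2_eq_neg_glOp (lam : ℂ) : J2 lam = -glOp lam (some 1) none := by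
  change _ = -(Mf Yv * homDeriv lam none)
  rw [J2, homDeriv_none_eq, sq, mul_comm Xv Yv, Mf_mul, Mf_mul, mul_sub, mul_smul_comm, mul_one]
  noncomm_ring

lemma J3_eq_glOp (lam : ℂ) : J3 = glOp lam (some 1) (some 0) := rfl

lemma J4_eq_glOp (lam : ℂ) : J4 = glOp lam none (some 0) := (one_mul Dx).symm

lemma J5_eq_glOp (lam : ℂ) : J5 = glOp lam none (some 1) := (one_mul Dy).symm

lemma J6_eq_glOp (lam : ℂ) : J6 = glOp lam (some 0) (some 1) := rfl

lemma J7_eq_glOp_sub (lam : ℂ) : J7 lam = glOp lam (some 0) (some 0) - (lam / 3) • 1 := rfl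

lemma J8_eq_glOp_sub (lam : ℂ) : J8 lam = glOp lam (some 1) (some 1) - (lam / 3) • 1 := rfl

lemma glOp_none_none_eq (lam : ℂ) :
    glOp (σ := Fin 2) lam none none =
      lam • 1 - (glOp lam (some 0) (some 0) + glOp lam (some 1) (some 1)) :=
  (one_mul _).trans (homDeriv_none_eq lam)

lemma generators_subset_glSpan (lam : ℂ) :
    insert 1 {J1 lam, J2 lam, J3, J4, J5, J6, J7 lam, J8 lam} ⊆
      (glSpan (Fin 2) lam : Set (Module.End ℂ R2)) := by
  have hgl := glOp_mem_glSpan (σ := Fin 2) lam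
  have hone := one_mem_glSpan (σ := Fin 2) lam
  have hsub (i : Fin 2) : glOp lam (some i) (some i) - (lam / 3) • 1 ∈ glSpan (Fin 2) lam :=
    sub_mem (hgl _ _) (Submodule.smul_mem _ _ hone)
  rw [J1_eq_neg_glOp, J2_eq_neg_glOp, J3_eq_glOp lam, J4_eq_glOp lam, J5_eq_glOp lam,
    J6_eq_glOp lam, J7_eq_glOp_sub, J8_eq_glOp_sub]
  simp only [Set.insert_subset_iff, Set.singleton_subset_iff, SetLike.mem_coe, neg_mem_iff]
  exact ⟨hone, hgl _ _, hgl _ _, hgl _ _, hgl _ _, hgl _ _, hgl _ _, hsub 0, hsub 1⟩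

lemma glSpan_le_of_generators_subset {lam : ℂ} {V : Submodule ℂ (Module.End ℂ R2)}
    (h : insert 1 {J1 lam, J2 lam, J3, J4, J5, J6, J7 lam, J8 lam} ⊆
      (V : Set (Module.End ℂ R2))) :
    glSpan (Fin 2) lam ≤ V := by
  rw [J1_eq_neg_glOp, J2_eq_neg_glOp, J3_eq_glOp lam, J4_eq_glOp lam, J5_eq_glOp lam,
    J6_eq_glOp lam, J7_eq_glOp_sub, J8_eq_glOp_sub] at h
  simp only [Set.insert_subset_iff, Set.singleton_subset_iff, SetLike.mem_coe, neg_mem_iff] at h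
  obtain ⟨hone, hxz, hyz, hyx, hzx, hzy, hxy, hxx, hyy⟩ := h
  rw [V.sub_mem_iff_left (V.smul_mem _ hone)] at hxx hyy
  have hzz : glOp lam none none ∈ V := by
    rw [glOp_none_none_eq]
    exact sub_mem (V.smul_mem lam hone) (add_mem hxx hyy)
  refine Submodule.span_le.mpr (Set.insert_subset hone ?_)
  rintro _ ⟨⟨i, j⟩, rfl⟩
  change glOp lam i j ∈ V
  match i, j with
  | none, none => exact hzz
  | none, some 0 => exact hzx
  | none, some 1 => exact hzy
  | some 0, none => exact hxz
  | some 1, none => exact hyz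
  | some 0, some 0 => exact hxx
  | some 0, some 1 => exact hxy
  | some 1, some 0 => exact hyx
  | some 1, some 1 => exact hyy

lemma span_insert_one_generators (lam : ℂ) :
    Submodule.span ℂ (insert 1 {J1 lam, J2 lam, J3, J4, J5, J6, J7 lam, J8 lam}) =
      glSpan (Fin 2) lam :=
  le_antisymm (Submodule.span_le.mpr (generators_subset_glSpan lam))
    (glSpan_le_of_generators_subset Submodule.subset_span)

lemma span_prodsLE_generators (lam : ℂ) (k : ℕ) :
    Submodule.span ℂ (prodsLE k {J1 lam, J2 lam, J3, J4, J5, J6, J7 lam, J8 lam}) =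
      glSpan (Fin 2) lam ^ k := by
  rw [prodsLE_eq_pow, ← Submodule.span_pow, span_insert_one_generators]

lemma four_mul_choose_two_sq (k : ℕ) : 4 * (2 + k).choose k ^ 2 = (k + 1) ^ 2 * (k + 2) ^ 2 := by
  have h : (k + 2) * (k + 1) = (2 + k).choose k * 2 := by
    rw [← Nat.choose_symm_add, add_comm 2 k, ← Nat.add_one_mul_choose_eq, Nat.choose_one_right]
  calc 4 * (2 + k).choose k ^ 2 = ((2 + k).choose k * 2) ^ 2 := by ring
    _ = (k + 1) ^ 2 * (k + 2) ^ 2 := by rw [← h]; ring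

end PlaneGenerators

theorem stmt7 (lam : ℂ) (k : ℕ) :
    4 * Module.finrank ℂ ↥(Submodule.span ℂ (prodsLE k
      ({J1 lam, J2 lam, J3, J4, J5, J6, J7 lam, J8 lam} : Set (Module.End ℂ R2)))) =
      (k + 1) ^ 2 * (k + 2) ^ 2 := by
  rw [span_prodsLE_generators, stmt7_general, Fintype.card_fin, four_mul_choose_two_sq]
end
end

section
/- Let n, k ∈ ℕ with k ≤ n. Let f_{ij} ∈ R for 0 ≤ i + j ≤ k, and set T = Σ_{i+j≤k} M_{f_{ij}} ∘ D_x^i ∘ D_y^j. If T preserves 𝒯ₙ, then T lies in the ℂ-linear span of all compositions of at most k elements of {J¹, …, J⁸} (the empty composition being the identity). -/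
noncomputable section

open MvPolynomial

/-- The index set `{(i,j) : i + j ≤ k}`. -/
def tIdx (k : ℕ) : Finset (ℕ × ℕ) :=
  (Finset.range (k + 1) ×ˢ Finset.range (k + 1)).filter (fun ij => ij.1 + ij.2 ≤ k)

/-!
Let `L` be the space of multiplications by linear forms, `D` the space of constant-coefficient
derivations, `E` the Euler operator, and `H = 1 + LD`, which commutes with `L` and with `D`. An
operator of order at most `k` is the sum of an element of `(H + D)ᵏ` and of operators
`A_d ∈ Lᵈ Hᵏ`, `d ≥ 1`, and each `A_d` raises degrees by exactly `d`. If the operator preserves the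
polynomials of degree at most `n`, so does `∑ A_d`, which means that `A_d` kills all forms of
degrees `n - d + 1, …, n`.

Killing forms of degree `n` forces right divisibility by `E - n`. For `u ∈ Lʲ`, `w ∈ Dʲ` the
relation `wE = Ew + jw` gives `(n - j) uw = uEw - uw(E - n)`, so that for `j < n` an operator in
`Hʲ⁺¹` equals one in `Lʲ⁺¹ Dʲ⁺¹` modulo `Hʲ (E - n)`. An operator `S` of pure order `j ≤ n` that
kills the forms of degree `n` is zero: on powers of a linear form `l` it is given by
`S(lᵐ) = m(m-1)⋯(m-j+1) g lᵐ⁻ʲ` with `g` independent of `m`, whence `g = 0`. Lowering the order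
and the degree `n` together, which is possible because `k ≤ n`, one finds that `A_d` is zero or lies
in `Lᵈ Hᵏ⁻ᵈ (E - n + d - 1) ⋯ (E - n + 1)(E - n)`. Moving the factors of `Lᵈ` inwards turns the
latter space into one spanned by products of `k - d` elements of `H` and `d` of `L (E - n)`. For two
variables, `H`, `D` and `L (E - n)` are spanned by the identity and the `𝔰𝔩₃` generators.
-/

namespace PolyDiffOp

/-- The space `L` of multiplications by linear forms. -/
def varMul (σ K : Type*) [CommRing K] : Submodule K (Module.End K (MvPolynomial σ K)) :=
  Submodule.span K (Set.range fun i => LinearMap.mulLeft K (X i))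

/-- The space `D` of derivations with constant coefficients. -/
def partials (σ K : Type*) [CommRing K] : Submodule K (Module.End K (MvPolynomial σ K)) :=
  Submodule.span K (Set.range fun i => (pderiv i).toLinearMap)

/-- The space `H = 1 + LD`, spanned by the identity and the generators `xᵢ ∂ⱼ` of `𝔤𝔩`. -/
def glOps (σ K : Type*) [CommRing K] : Submodule K (Module.End K (MvPolynomial σ K)) :=
  1 ⊔ varMul σ K * partials σ K

/-- The space `H + D`, spanned by the identity and the infinitesimal affine transformations. -/
def affineOps (σ K : Type*) [CommRing K] : Submodule K (Module.End K (MvPolynomial σ K)) :=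
  glOps σ K ⊔ partials σ K

/-- The space of multiplications by arbitrary polynomials. -/
def polyMul (σ K : Type*) [CommRing K] : Submodule K (Module.End K (MvPolynomial σ K)) :=
  LinearMap.range (Algebra.lmul K (MvPolynomial σ K)).toLinearMap

/-- The differential operators of order at most `k` with polynomial coefficients, written with all
coefficients to the left of the derivatives. -/
def diffOpsLE (σ K : Type*) [CommRing K] (k : ℕ) :
    Submodule K (Module.End K (MvPolynomial σ K)) :=
  ⨆ q ≤ k, polyMul σ K * partials σ K ^ q

/-- The Euler operator `E = ∑ᵢ xᵢ ∂ᵢ`. -/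
def euler (σ K : Type*) [Fintype σ] [CommRing K] : Module.End K (MvPolynomial σ K) :=
  ∑ i, LinearMap.mulLeft K (X i) * (pderiv i).toLinearMap

/-- The product `(E - c + d - 1) ⋯ (E - c + 1) (E - c)`, which kills the forms of the `d` degrees
`c - d + 1, …, c` when `c` is a natural number. -/
def eulerProd (σ K : Type*) [Fintype σ] [CommRing K] :
    ℕ → K → Module.End K (MvPolynomial σ K)
  | 0, _ => 1
  | d + 1, c => eulerProd σ K d (c - 1) * (euler σ K - algebraMap K _ c)

/-- The space `H + D + L (E - c)`, spanned by the identity and the infinitesimal projective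
transformations twisted by the weight `c`. -/
def projectiveOps (σ K : Type*) [Fintype σ] [CommRing K] (c : K) :
    Submodule K (Module.End K (MvPolynomial σ K)) :=
  affineOps σ K ⊔ varMul σ K * Submodule.span K {euler σ K - algebraMap K _ c}

section CompatibleMaps

variable {R M : Type*} [CommSemiring R] [AddCommMonoid M] [Module R M]

lemma compatibleMaps_mul_le (U V W : Submodule R M) :
    V.compatibleMaps W * U.compatibleMaps V ≤ U.compatibleMaps W :=
  Submodule.mul_le.2 fun _ hA _ hB _ hf => hA (hB hf)

lemma compatibleMaps_self_pow_le (U : Submodule R M) (k : ℕ) :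
    U.compatibleMaps U ^ k ≤ U.compatibleMaps U := by
  induction k with
  | zero => exact Submodule.one_le.2 fun _ hf => hf
  | succ k ih =>
    calc U.compatibleMaps U ^ (k + 1) ≤ U.compatibleMaps U * U.compatibleMaps U := by
          rw [pow_succ]; gcongr
      _ ≤ U.compatibleMaps U := compatibleMaps_mul_le U U U

end CompatibleMaps

variable {σ K : Type*}

local notation "𝓛" => varMul σ K
local notation "𝓓" => partials σ K
local notation "𝓗" => glOps σ K
local notation "𝓐" => affineOps σ K
local notation "𝓜" => polyMul σ K
local notation "𝓔" => euler σ K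
local notation "𝓡" => homogeneousSubmodule σ K

section CommRing

variable [CommRing K]

lemma mulLeft_X_mem_varMul (i : σ) : LinearMap.mulLeft K (X i) ∈ 𝓛 :=
  Submodule.subset_span ⟨i, rfl⟩

lemma pderiv_mem_partials (i : σ) : (pderiv i).toLinearMap ∈ 𝓓 :=
  Submodule.subset_span ⟨i, rfl⟩

lemma mulLeft_mul_mem_diffOpsLE {i j k : ℕ} (hijk : i + j ≤ k) (g : MvPolynomial σ K) {v w}
    (hv : v ∈ 𝓓 ^ i) (hw : w ∈ 𝓓 ^ j) :
    LinearMap.mulLeft K g * v * w ∈ diffOpsLE σ K k := by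
  refine Submodule.mem_iSup_of_mem _ (Submodule.mem_iSup_of_mem hijk ?_)
  rw [mul_assoc, pow_add]
  exact Submodule.mul_mem_mul ⟨g, rfl⟩ (Submodule.mul_mem_mul hv hw)

lemma pderiv_mul_mulLeft_X [DecidableEq σ] (i j : σ) :
    ((pderiv i).toLinearMap : Module.End K (MvPolynomial σ K)) * LinearMap.mulLeft K (X j) =
      LinearMap.mulLeft K (X j) * (pderiv i).toLinearMap +
        algebraMap K _ (if j = i then 1 else 0) := by
  refine LinearMap.ext fun p => ?_
  rcases eq_or_ne j i with rfl | h
  · simp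
  · simp [pderiv_X_of_ne h, h]

lemma one_sup_partials_mul_varMul : 1 ⊔ 𝓓 * 𝓛 = 𝓗 := by
  classical
  refine le_antisymm (sup_le le_sup_left ?_) (sup_le le_sup_left ?_) <;>
    rw [varMul, partials, Submodule.span_mul_span, Submodule.span_le]
  · rintro _ ⟨_, ⟨i, rfl⟩, _, ⟨j, rfl⟩, rfl⟩
    have hLD := Submodule.mul_mem_mul (mulLeft_X_mem_varMul (K := K) j) (pderiv_mem_partials i)
    change (pderiv i).toLinearMap * LinearMap.mulLeft K (X j) ∈ 𝓗
    exact (pderiv_mul_mulLeft_X (K := K) i j) ▸ add_mem (Submodule.mem_sup_right hLD)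
      (Submodule.mem_sup_left (Submodule.algebraMap_mem _))
  · rintro _ ⟨_, ⟨j, rfl⟩, _, ⟨i, rfl⟩, rfl⟩
    have hDL := Submodule.mul_mem_mul (pderiv_mem_partials (K := K) i) (mulLeft_X_mem_varMul j)
    change LinearMap.mulLeft K (X j) * (pderiv i).toLinearMap ∈ 1 ⊔ 𝓓 * 𝓛
    exact (eq_sub_of_add_eq (pderiv_mul_mulLeft_X (K := K) i j).symm) ▸
      sub_mem (Submodule.mem_sup_right hDL) (Submodule.mem_sup_left (Submodule.algebraMap_mem _))

lemma commute_varMul_glOps : Commute 𝓛 𝓗 :=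
  calc 𝓛 * 𝓗 = 𝓛 * (1 ⊔ 𝓓 * 𝓛) := by rw [one_sup_partials_mul_varMul]
    _ = (1 ⊔ 𝓛 * 𝓓) * 𝓛 := by
      rw [Submodule.mul_sup, Submodule.sup_mul, mul_one, one_mul, mul_assoc]

lemma commute_partials_glOps : Commute 𝓓 𝓗 :=
  calc 𝓓 * 𝓗 = (1 ⊔ 𝓓 * 𝓛) * 𝓓 := by
        rw [glOps, Submodule.mul_sup, Submodule.sup_mul, mul_one, one_mul, mul_assoc]
    _ = 𝓗 * 𝓓 := by rw [one_sup_partials_mul_varMul]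

lemma varMul_pow_succ_mul_partials_pow_succ (q : ℕ) :
    𝓛 ^ (q + 1) * 𝓓 ^ (q + 1) = 𝓛 ^ q * (𝓛 * 𝓓) * 𝓓 ^ q := by
  rw [pow_succ, pow_succ' (partials σ K), mul_assoc, mul_assoc, mul_assoc]

lemma varMul_pow_mul_partials_pow_mul_glOps (q : ℕ) :
    𝓛 ^ q * 𝓓 ^ q * 𝓗 = 𝓛 ^ q * 𝓓 ^ q ⊔ 𝓛 ^ (q + 1) * 𝓓 ^ (q + 1) :=
  calc 𝓛 ^ q * 𝓓 ^ q * 𝓗 = 𝓛 ^ q * 𝓗 * 𝓓 ^ q := by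
        rw [mul_assoc, ((commute_partials_glOps (σ := σ) (K := K)).pow_left q).eq, mul_assoc]
    _ = 𝓛 ^ q * 𝓓 ^ q ⊔ 𝓛 ^ q * (𝓛 * 𝓓) * 𝓓 ^ q := by
        rw [glOps, Submodule.mul_sup, Submodule.sup_mul, mul_one]
    _ = 𝓛 ^ q * 𝓓 ^ q ⊔ 𝓛 ^ (q + 1) * 𝓓 ^ (q + 1) := by
        rw [varMul_pow_succ_mul_partials_pow_succ]

lemma varMul_pow_mul_partials_pow_le_glOps_pow (q : ℕ) : 𝓛 ^ q * 𝓓 ^ q ≤ 𝓗 ^ q := by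
  induction q with
  | zero => simp
  | succ q ih =>
    calc 𝓛 ^ (q + 1) * 𝓓 ^ (q + 1) ≤ 𝓛 ^ q * 𝓓 ^ q * 𝓗 := by
          rw [varMul_pow_mul_partials_pow_mul_glOps]; exact le_sup_right
      _ ≤ 𝓗 ^ q * 𝓗 := by gcongr
      _ = 𝓗 ^ (q + 1) := (pow_succ _ _).symm

lemma varMul_pow_mul_partials_pow_le_affineOps_pow {p q : ℕ} (hpq : p ≤ q) :
    𝓛 ^ p * 𝓓 ^ q ≤ 𝓐 ^ q := by
  obtain ⟨r, rfl⟩ := Nat.exists_eq_add_of_le hpq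
  calc 𝓛 ^ p * 𝓓 ^ (p + r) = 𝓛 ^ p * 𝓓 ^ p * 𝓓 ^ r := by rw [pow_add, mul_assoc]
    _ ≤ 𝓗 ^ p * 𝓓 ^ r := by gcongr; exact varMul_pow_mul_partials_pow_le_glOps_pow p
    _ ≤ 𝓐 ^ p * 𝓐 ^ r := by
      gcongr
      · exact le_sup_left
      · exact le_sup_right
    _ = 𝓐 ^ (p + r) := (pow_add _ _ _).symm

lemma varMul_pow_eq (d : ℕ) :
    𝓛 ^ d = (homogeneousSubmodule σ K d).map (Algebra.lmul K _).toLinearMap := by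
  rw [← homogeneousSubmodule_one_pow, Submodule.map_pow, homogeneousSubmodule_one_eq_span_X,
    Submodule.map_span, ← Set.range_comp]
  rfl

lemma varMul_pow_le_polyMul (d : ℕ) : 𝓛 ^ d ≤ 𝓜 :=
  varMul_pow_eq (σ := σ) (K := K) d ▸ LinearMap.map_le_range

lemma iSup_varMul_pow : ⨆ p, 𝓛 ^ p = 𝓜 := by
  have htop : ⨆ p, 𝓡 p = ⊤ :=
    letI := decomposition (σ := σ) (R := K)
    (DirectSum.Decomposition.isInternal 𝓡).submodule_iSup_eq_top
  simp only [varMul_pow_eq, ← Submodule.map_iSup, htop, Submodule.map_top, polyMul]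

lemma one_le_affineOps : 1 ≤ 𝓐 := le_sup_left.trans le_sup_left

lemma diffOpsLE_le_sup (k : ℕ) :
    diffOpsLE σ K k ≤ 𝓐 ^ k ⊔ ⨆ d, 𝓛 ^ (d + 1) * 𝓗 ^ k := by
  refine iSup₂_le fun q hq => ?_
  rw [← iSup_varMul_pow, Submodule.iSup_mul]
  refine iSup_le fun p => ?_
  rcases le_or_gt p q with hpq | hqp
  · calc 𝓛 ^ p * 𝓓 ^ q ≤ 𝓐 ^ q := varMul_pow_mul_partials_pow_le_affineOps_pow hpq
      _ ≤ 𝓐 ^ k := pow_le_pow_right' one_le_affineOps hq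
      _ ≤ _ := le_sup_left
  · obtain ⟨d, rfl⟩ : ∃ d, p = d + 1 + q := ⟨p - q - 1, by lia⟩
    calc 𝓛 ^ (d + 1 + q) * 𝓓 ^ q = 𝓛 ^ (d + 1) * (𝓛 ^ q * 𝓓 ^ q) := by rw [pow_add, mul_assoc]
      _ ≤ 𝓛 ^ (d + 1) * 𝓗 ^ q := by
        gcongr
        exact varMul_pow_mul_partials_pow_le_glOps_pow q
      _ ≤ 𝓛 ^ (d + 1) * 𝓗 ^ k := by
        gcongr
        · exact le_sup_left
      _ ≤ ⨆ d, 𝓛 ^ (d + 1) * 𝓗 ^ k := le_iSup (fun d => 𝓛 ^ (d + 1) * 𝓗 ^ k) d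
      _ ≤ _ := le_sup_right

lemma linearMap_ext_isHomogeneous {A B : Module.End K (MvPolynomial σ K)}
    (h : ∀ m f, f.IsHomogeneous m → A f = B f) : A = B :=
  LinearMap.ext fun p => by
    rw [← sum_homogeneousComponent p, map_sum, map_sum]
    exact Finset.sum_congr rfl fun m _ => h m _ (homogeneousComponent_isHomogeneous m p)

lemma pderiv_eq_zero_of_isHomogeneous_zero {f : MvPolynomial σ K} (hf : f.IsHomogeneous 0)
    (i : σ) : pderiv i f = 0 := by
  rw [← totalDegree_zero_iff_isHomogeneous, totalDegree_eq_zero_iff_eq_C] at hf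
  rw [hf, pderiv_C]

lemma varMul_le_compatibleMaps (m : ℕ) : 𝓛 ≤ (𝓡 m).compatibleMaps (𝓡 (m + 1)) := by
  refine Submodule.span_le.2 ?_
  rintro _ ⟨i, rfl⟩ f hf
  exact add_comm 1 m ▸ (isHomogeneous_X K i).mul hf

lemma partials_le_compatibleMaps (m : ℕ) : 𝓓 ≤ (𝓡 (m + 1)).compatibleMaps (𝓡 m) := by
  refine Submodule.span_le.2 ?_
  rintro _ ⟨i, rfl⟩ f hf
  exact hf.pderiv

lemma apply_eq_zero_of_mem_partials {A} (hA : A ∈ 𝓓) {f : MvPolynomial σ K}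
    (hf : f.IsHomogeneous 0) : A f = 0 := by
  have h : 𝓓 ≤ (𝓡 0).compatibleMaps ⊥ := by
    refine Submodule.span_le.2 ?_
    rintro _ ⟨i, rfl⟩ g hg
    exact pderiv_eq_zero_of_isHomogeneous_zero hg i
  exact (Submodule.mem_bot K).1 (h hA hf)

lemma glOps_le_compatibleMaps (m : ℕ) : 𝓗 ≤ (𝓡 m).compatibleMaps (𝓡 m) := by
  refine sup_le (Submodule.one_le.2 fun _ hf => hf) ?_
  cases m with
  | zero =>
    refine Submodule.mul_le.2 fun l _ δ hδ f hf => ?_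
    have : δ f = 0 := apply_eq_zero_of_mem_partials hδ hf
    simp [this]
  | succ m =>
    exact (mul_le_mul' (varMul_le_compatibleMaps m) (partials_le_compatibleMaps m)).trans
      (compatibleMaps_mul_le _ _ _)

lemma varMul_pow_mul_glOps_pow_le_compatibleMaps (d k m : ℕ) :
    𝓛 ^ d * 𝓗 ^ k ≤ (𝓡 m).compatibleMaps (𝓡 (m + d)) := by
  induction d with
  | zero =>
    rw [pow_zero, one_mul]
    exact (pow_le_pow_left' (glOps_le_compatibleMaps m) k).trans (compatibleMaps_self_pow_le _ k)
  | succ d ih =>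
    rw [pow_succ', mul_assoc]
    exact (mul_le_mul' (varMul_le_compatibleMaps (m + d)) ih).trans (compatibleMaps_mul_le _ _ _)

lemma mem_compatibleMaps_restrictTotalDegree {n : ℕ} {A : Module.End K (MvPolynomial σ K)}
    (h : ∀ m ≤ n, ∀ f, f.IsHomogeneous m → (A f).totalDegree ≤ n) :
    A ∈ (restrictTotalDegree σ K n).compatibleMaps (restrictTotalDegree σ K n) := fun f hf => by
  rw [mem_restrictTotalDegree] at hf
  rw [Submodule.mem_comap, ← sum_homogeneousComponent f, map_sum]
  refine sum_mem fun m hm => (mem_restrictTotalDegree σ n _).2 ?_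
  exact h m (by grind) _ (homogeneousComponent_isHomogeneous m f)

lemma affineOps_pow_le_compatibleMaps (n k : ℕ) : 𝓐 ^ k ≤
    (restrictTotalDegree σ K n).compatibleMaps (restrictTotalDegree σ K n) := by
  refine (pow_le_pow_left' (sup_le ?_ ?_) k).trans (compatibleMaps_self_pow_le _ k)
  · intro A hA
    exact mem_compatibleMaps_restrictTotalDegree fun m hm f hf =>
      (IsHomogeneous.totalDegree_le (glOps_le_compatibleMaps m hA hf)).trans hm
  · intro A hA
    refine mem_compatibleMaps_restrictTotalDegree fun m hm f hf => ?_
    cases m with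
    | zero => simp [apply_eq_zero_of_mem_partials hA hf]
    | succ m =>
      exact (IsHomogeneous.totalDegree_le (partials_le_compatibleMaps m hA hf)).trans (by lia)

lemma apply_pow_of_mem_partials {δ} (hδ : δ ∈ 𝓓) (l : MvPolynomial σ K) (m : ℕ) :
    δ (l ^ m) = m • (l ^ (m - 1) * δ l) := by
  induction hδ using Submodule.span_induction with
  | mem δ h =>
    obtain ⟨i, rfl⟩ := h
    exact (pderiv i).leibniz_pow l m
  | zero => simp
  | add A B _ _ hA hB => simp [hA, hB, mul_add]
  | smul c A _ hA => simp [hA]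

lemma exists_apply_pow_of_mem_partials_pow {k : ℕ} {w} (hw : w ∈ 𝓓 ^ k) {l : MvPolynomial σ K}
    (hl : l.IsHomogeneous 1) :
    ∃ c : K, ∀ m : ℕ, w (l ^ m) = m.descFactorial k • c • l ^ (m - k) := by
  induction hw using Submodule.pow_induction_on_left' with
  | algebraMap r => exact ⟨r, fun m => by simp⟩
  | add A B k _ _ hA hB =>
    obtain ⟨⟨a, ha⟩, b, hb⟩ := And.intro hA hB
    exact ⟨a + b, fun m => by rw [LinearMap.add_apply, ha, hb, add_smul, smul_add]⟩
  | mem_mul δ hδ k w _ hw =>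
    obtain ⟨c, hc⟩ := hw
    obtain ⟨b, hb⟩ : ∃ b : K, δ l = C b := by
      have hδl : (δ l).IsHomogeneous 0 := partials_le_compatibleMaps 0 hδ hl
      exact ⟨_, totalDegree_eq_zero_iff_eq_C.1 ((totalDegree_zero_iff_isHomogeneous _).2 hδl)⟩
    refine ⟨b * c, fun m => ?_⟩
    rw [Module.End.mul_apply, hc, map_nsmul, map_smul, apply_pow_of_mem_partials hδ, hb,
      mul_comm _ (C b), ← smul_eq_C_mul, Nat.descFactorial_succ, Nat.sub_sub]
    module

lemma exists_apply_pow_of_mem_polyMul_mul {k : ℕ} {A} (hA : A ∈ 𝓜 * 𝓓 ^ k)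
    {l : MvPolynomial σ K} (hl : l.IsHomogeneous 1) :
    ∃ g, ∀ m : ℕ, A (l ^ m) = m.descFactorial k • (g * l ^ (m - k)) := by
  induction hA using Submodule.mul_induction_on' with
  | mem_mul_mem a ha w hw =>
    obtain ⟨g, rfl⟩ := ha
    obtain ⟨c, hc⟩ := exists_apply_pow_of_mem_partials_pow hw hl
    refine ⟨c • g, fun m => ?_⟩
    change g * w (l ^ m) = _
    rw [hc, mul_smul_comm, mul_smul_comm, smul_mul_assoc]
  | add A _ B _ hA hB =>
    obtain ⟨⟨a, ha⟩, b, hb⟩ := And.intro hA hB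
    exact ⟨a + b, fun m => by rw [LinearMap.add_apply, ha, hb, add_mul, smul_add]⟩

end CommRing

section EulerOperator

variable [Fintype σ] [CommRing K]

lemma euler_mem_varMul_mul_partials : 𝓔 ∈ 𝓛 * 𝓓 :=
  sum_mem fun i _ =>
    Submodule.mul_mem_mul (mulLeft_X_mem_varMul i) (pderiv_mem_partials i)

lemma euler_apply_of_isHomogeneous {m : ℕ} {f : MvPolynomial σ K} (hf : f.IsHomogeneous m) :
    𝓔 f = m • f := by
  simpa [euler] using hf.sum_X_mul_pderiv

lemma commute_euler_of_mem_glOps {A} (hA : A ∈ 𝓗) : Commute 𝓔 A :=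
  linearMap_ext_isHomogeneous fun m f hf => by
    have hAf : (A f).IsHomogeneous m := glOps_le_compatibleMaps m hA hf
    rw [Module.End.mul_apply, Module.End.mul_apply, euler_apply_of_isHomogeneous hf,
      euler_apply_of_isHomogeneous hAf, map_nsmul]

lemma euler_mul_of_mem_varMul {A} (hA : A ∈ 𝓛) : 𝓔 * A = A * 𝓔 + A :=
  linearMap_ext_isHomogeneous fun m f hf => by
    have hAf : (A f).IsHomogeneous (m + 1) := varMul_le_compatibleMaps m hA hf
    rw [LinearMap.add_apply, Module.End.mul_apply, Module.End.mul_apply,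
      euler_apply_of_isHomogeneous hf, euler_apply_of_isHomogeneous hAf, map_nsmul, succ_nsmul]

lemma mul_euler_of_mem_partials {A} (hA : A ∈ 𝓓) : A * 𝓔 = 𝓔 * A + A := by
  refine linearMap_ext_isHomogeneous fun m f hf => ?_
  rw [LinearMap.add_apply, Module.End.mul_apply, Module.End.mul_apply,
    euler_apply_of_isHomogeneous hf]
  cases m with
  | zero => simp [apply_eq_zero_of_mem_partials hA hf]
  | succ m =>
    have hAf : (A f).IsHomogeneous m := partials_le_compatibleMaps m hA hf
    rw [euler_apply_of_isHomogeneous hAf, map_nsmul, succ_nsmul]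

lemma mul_euler_of_mem_partials_pow {q : ℕ} {A} (hA : A ∈ 𝓓 ^ q) :
    A * 𝓔 = 𝓔 * A + q • A := by
  induction hA using Submodule.pow_induction_on_left' with
  | algebraMap r => simp [Algebra.commutes]
  | add A B q _ _ hA hB => rw [add_mul, hA, hB, mul_add, smul_add]; abel
  | mem_mul δ hδ q A _ hA =>
    rw [mul_assoc, hA, mul_add, ← mul_assoc, mul_euler_of_mem_partials hδ, add_mul, mul_assoc,
      mul_smul_comm, succ_nsmul]
    abel

lemma commute_span_euler_sub_glOps (c : K) :
    Commute (Submodule.span K {𝓔 - algebraMap K _ c}) 𝓗 :=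
  Submodule.mul_comm_of_commute fun A hA B hB => by
    obtain ⟨r, rfl⟩ := Submodule.mem_span_singleton.1 hA
    exact ((commute_euler_of_mem_glOps hB).sub_left (Algebra.commutes c B)).smul_left r

lemma varMul_mul_eulerProd {l} (hl : l ∈ 𝓛) (d : ℕ) (c : K) :
    l * eulerProd σ K d (c - 1) = eulerProd σ K d c * l := by
  induction d generalizing c with
  | zero => simp [eulerProd]
  | succ d ih =>
    have hstep : l * (𝓔 - algebraMap K _ (c - 1)) = (𝓔 - algebraMap K _ c) * l := by
      rw [mul_sub, sub_mul, euler_mul_of_mem_varMul hl, ← Algebra.commutes, map_sub, map_one,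
        sub_mul, one_mul]
      abel
    rw [eulerProd, eulerProd, ← mul_assoc, ih, mul_assoc, hstep, mul_assoc]

lemma affineOps_le_projectiveOps (c : K) : 𝓐 ≤ projectiveOps σ K c := le_sup_left

lemma varMul_pow_mul_span_eulerProd_le (d : ℕ) (c : K) :
    𝓛 ^ d * Submodule.span K {eulerProd σ K d c} ≤ projectiveOps σ K c ^ d := by
  induction d with
  | zero => simp [eulerProd, ← Submodule.one_eq_span]
  | succ d ih =>
    have hcomm : 𝓛 * Submodule.span K {eulerProd σ K (d + 1) c} ≤
        Submodule.span K {eulerProd σ K d c} * (𝓛 * Submodule.span K {𝓔 - algebraMap K _ c}) := by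
      refine Submodule.mul_le.2 fun l hl A hA => ?_
      obtain ⟨r, rfl⟩ := Submodule.mem_span_singleton.1 hA
      have : l * r • eulerProd σ K (d + 1) c =
          r • (eulerProd σ K d c * (l * (𝓔 - algebraMap K _ c))) := by
        rw [eulerProd, mul_smul_comm, ← mul_assoc, varMul_mul_eulerProd hl, mul_assoc]
      rw [this]
      exact Submodule.smul_mem _ r <| Submodule.mul_mem_mul (Submodule.mem_span_singleton_self _) <|
        Submodule.mul_mem_mul hl (Submodule.mem_span_singleton_self _)
    calc 𝓛 ^ (d + 1) * Submodule.span K {eulerProd σ K (d + 1) c}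
        ≤ 𝓛 ^ d * (Submodule.span K {eulerProd σ K d c} *
          (𝓛 * Submodule.span K {𝓔 - algebraMap K _ c})) := by
          rw [pow_succ, mul_assoc]; gcongr
      _ ≤ projectiveOps σ K c ^ d * projectiveOps σ K c := by
          rw [← mul_assoc]; gcongr; exact le_sup_right
      _ = projectiveOps σ K c ^ (d + 1) := (pow_succ _ _).symm

lemma varMul_pow_mul_glOps_pow_mul_span_eulerProd_le (d j : ℕ) (c : K) :
    𝓛 ^ d * 𝓗 ^ j * Submodule.span K {eulerProd σ K d c} ≤ projectiveOps σ K c ^ (j + d) := by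
  have hcomm : Commute (𝓛 ^ d) (𝓗 ^ j) := commute_varMul_glOps.pow_pow d j
  calc 𝓛 ^ d * 𝓗 ^ j * Submodule.span K {eulerProd σ K d c}
      = 𝓗 ^ j * (𝓛 ^ d * Submodule.span K {eulerProd σ K d c}) := by rw [hcomm.eq, mul_assoc]
    _ ≤ projectiveOps σ K c ^ j * projectiveOps σ K c ^ d := by
        gcongr
        · exact le_sup_left.trans le_sup_left
        · exact varMul_pow_mul_span_eulerProd_le d c
    _ = projectiveOps σ K c ^ (j + d) := (pow_add _ _ _).symm

end EulerOperator

section CharZero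

variable [Field K] [CharZero K]

lemma mem_of_forall_sum_pow_smul_mem {F V : Type*} [Field F] [Infinite F] [AddCommGroup V]
    [Module F V] (W : Submodule F V) (v : ℕ → V) (N : ℕ)
    (h : ∀ t : F, ∑ j ∈ Finset.range N, t ^ j • v j ∈ W) {j : ℕ} (hj : j < N) : v j ∈ W := by
  refine (Subspace.forall_mem_dualAnnihilator_apply_eq_zero_iff W (v j)).1 fun φ hφ => ?_
  let P : Polynomial F := ∑ i ∈ Finset.range N, Polynomial.monomial i (φ (v i))
  have hP : P = 0 := Polynomial.funext fun t => by
    have := (Submodule.mem_dualAnnihilator φ).1 hφ _ (h t)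
    simpa [P, Polynomial.eval_finsetSum, Polynomial.eval_monomial, mul_comm] using this
  simpa [P, Polynomial.finsetSum_coeff, Polynomial.coeff_monomial, hj] using
    congrArg (Polynomial.coeff · j) hP

lemma span_pow_isHomogeneous_one :
    Submodule.span K {p : MvPolynomial σ K | ∃ l m, l.IsHomogeneous 1 ∧ p = l ^ m} = ⊤ := by
  set W := Submodule.span K {p : MvPolynomial σ K | ∃ l m, l.IsHomogeneous 1 ∧ p = l ^ m}
  have hpow {l : MvPolynomial σ K} (hl : l.IsHomogeneous 1) (m : ℕ) : l ^ m ∈ W :=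
    Submodule.subset_span ⟨l, m, hl, rfl⟩
  have hX (i : σ) : W ≤ W.comap (LinearMap.mulLeft K (X i)) := by
    refine Submodule.span_le.2 ?_
    rintro _ ⟨l, m, hl, rfl⟩
    -- `(m + 1) xᵢ lᵐ` is the coefficient of `t` in `(t xᵢ + l)ᵐ⁺¹`.
    have hexpand (t : K) : ∑ j ∈ Finset.range (m + 1 + 1),
        t ^ j • (X i ^ j * l ^ (m + 1 - j) * ((m + 1).choose j : MvPolynomial σ K)) ∈ W := by
      have htl : (t • X i + l).IsHomogeneous 1 :=
        ((homogeneousSubmodule σ K 1).smul_mem t (isHomogeneous_X K i)).add hl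
      simpa only [add_pow, smul_pow, smul_mul_assoc] using hpow htl (m + 1)
    have hcoeff := mem_of_forall_sum_pow_smul_mem W _ _ hexpand (j := 1) (by lia)
    rw [pow_one, Nat.choose_one_right, Nat.add_sub_cancel, mul_comm, ← nsmul_eq_mul,
      ← Nat.cast_smul_eq_nsmul K] at hcoeff
    exact (Submodule.smul_mem_iff W (Nat.cast_ne_zero.2 m.succ_ne_zero)).1 hcoeff
  refine Submodule.eq_top_iff'.2 fun p => ?_
  induction p using MvPolynomial.induction_on with
  | C c => simpa [C_eq_smul_one] using W.smul_mem c (hpow (isHomogeneous_zero σ K 1) 0)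
  | add p q hp hq => exact add_mem hp hq
  | mul_X p i hp => exact mul_comm (X i) p ▸ hX i hp

lemma eq_zero_of_mem_polyMul_mul [Nonempty σ] {n k : ℕ} (hkn : k ≤ n) {A}
    (hA : A ∈ 𝓜 * 𝓓 ^ k) (hker : ∀ f : MvPolynomial σ K, f.IsHomogeneous n → A f = 0) :
    A = 0 := by
  have hpow_of_ne_zero {l : MvPolynomial σ K} (hl : l.IsHomogeneous 1) (hl0 : l ≠ 0) (m : ℕ) :
      A (l ^ m) = 0 := by
    obtain ⟨g, hg⟩ := exists_apply_pow_of_mem_polyMul_mul hA hl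
    have hn : n.descFactorial k • (g * l ^ (n - k)) = 0 :=
      hg n ▸ hker _ (by simpa using hl.pow n)
    have hg0 : g = 0 := by
      simpa [hl0, Nat.descFactorial_eq_zero_iff_lt, hkn.not_gt] using hn
    rw [hg, hg0, zero_mul, smul_zero]
  refine LinearMap.ext_on span_pow_isHomogeneous_one ?_
  rintro _ ⟨l, m, hl, rfl⟩
  rcases eq_or_ne l 0 with rfl | hl0
  · rcases Nat.eq_zero_or_pos m with rfl | hm
    · simpa using hpow_of_ne_zero (isHomogeneous_X K (Classical.arbitrary σ)) (X_ne_zero _) 0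
    · rw [zero_pow hm.ne', map_zero, map_zero]
  · exact hpow_of_ne_zero hl hl0 m

variable [Fintype σ]

lemma varMul_pow_mul_partials_pow_le_sup {n k : ℕ} (hkn : k < n) :
    𝓛 ^ k * 𝓓 ^ k ≤ 𝓛 ^ (k + 1) * 𝓓 ^ (k + 1) ⊔
      𝓛 ^ k * 𝓓 ^ k * Submodule.span K {𝓔 - algebraMap K _ (n : K)} := by
  refine Submodule.mul_le.2 fun u hu w hw => ?_
  have hid : ((n : K) - k) • (u * w) =
      u * 𝓔 * w - u * w * (𝓔 - algebraMap K _ (n : K)) := by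
    rw [mul_sub, mul_assoc u w, mul_euler_of_mem_partials_pow hw, ← Algebra.commutes,
      ← Algebra.smul_def, mul_add, mul_smul_comm, ← Nat.cast_smul_eq_nsmul K, mul_assoc]
    module
  rw [← Submodule.smul_mem_iff _ (sub_ne_zero.2 (Nat.cast_injective.ne hkn.ne') : (n : K) - k ≠ 0),
    hid]
  refine sub_mem (Submodule.mem_sup_left ?_) (Submodule.mem_sup_right ?_)
  · rw [varMul_pow_succ_mul_partials_pow_succ]
    exact Submodule.mul_mem_mul (Submodule.mul_mem_mul hu euler_mem_varMul_mul_partials) hw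
  · exact Submodule.mul_mem_mul (Submodule.mul_mem_mul hu hw) (Submodule.mem_span_singleton_self _)

lemma glOps_pow_succ_le_sup {n k : ℕ} (hkn : k < n) :
    𝓗 ^ (k + 1) ≤ 𝓛 ^ (k + 1) * 𝓓 ^ (k + 1) ⊔
      𝓗 ^ k * Submodule.span K {𝓔 - algebraMap K _ (n : K)} := by
  induction k with
  | zero =>
    have h := varMul_pow_mul_partials_pow_le_sup (σ := σ) (K := K) hkn
    simp only [pow_zero, one_mul, zero_add, pow_one] at h ⊢
    rw [glOps]
    exact sup_le h le_sup_left
  | succ k ih =>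
    set S := Submodule.span K {𝓔 - algebraMap K _ (n : K)}
    calc 𝓗 ^ (k + 2) ≤ (𝓛 ^ (k + 1) * 𝓓 ^ (k + 1) ⊔ 𝓗 ^ k * S) * 𝓗 := by
          rw [pow_succ]; gcongr; exact ih (by lia)
      _ = 𝓛 ^ (k + 1) * 𝓓 ^ (k + 1) ⊔ 𝓛 ^ (k + 2) * 𝓓 ^ (k + 2) ⊔ 𝓗 ^ (k + 1) * S := by
          rw [Submodule.sup_mul, varMul_pow_mul_partials_pow_mul_glOps, mul_assoc,
            (commute_span_euler_sub_glOps (σ := σ) (n : K)).eq, ← mul_assoc, pow_succ 𝓗]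
      _ ≤ 𝓛 ^ (k + 2) * 𝓓 ^ (k + 2) ⊔ 𝓗 ^ (k + 1) * S := by
          refine sup_le (sup_le ((varMul_pow_mul_partials_pow_le_sup hkn).trans ?_)
            le_sup_left) le_sup_right
          gcongr
          exact varMul_pow_mul_partials_pow_le_glOps_pow (k + 1)

lemma exists_eq_mul_euler_sub [Nonempty σ] {n k d : ℕ} (hkn : k < n) {A}
    (hA : A ∈ 𝓛 ^ d * 𝓗 ^ (k + 1))
    (hker : ∀ f : MvPolynomial σ K, f.IsHomogeneous n → A f = 0) :
    ∃ B ∈ 𝓛 ^ d * 𝓗 ^ k, A = B * (𝓔 - algebraMap K _ (n : K)) := by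
  have hle : 𝓛 ^ d * 𝓗 ^ (k + 1) ≤ 𝓜 * 𝓓 ^ (k + 1) ⊔
      𝓛 ^ d * 𝓗 ^ k * Submodule.span K {𝓔 - algebraMap K _ (n : K)} := by
    refine (mul_le_mul' le_rfl (glOps_pow_succ_le_sup hkn)).trans ?_
    rw [Submodule.mul_sup, ← mul_assoc, ← mul_assoc, ← pow_add]
    gcongr
    exact varMul_pow_le_polyMul _
  obtain ⟨S, hS, _, hB, rfl⟩ := Submodule.mem_sup.1 (hle hA)
  obtain ⟨B, hB', rfl⟩ := Submodule.mem_mul_span_singleton.1 hB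
  have hS0 : S = 0 := eq_zero_of_mem_polyMul_mul hkn hS fun f hf => by
    have h := hker f hf
    rwa [LinearMap.add_apply, Module.End.mul_apply, LinearMap.sub_apply,
      euler_apply_of_isHomogeneous hf, Module.algebraMap_end_apply, Nat.cast_smul_eq_nsmul,
      sub_self, map_zero, add_zero] at h
  exact ⟨B, hB', by rw [hS0, zero_add]⟩

lemma eq_zero_or_mem_mul_span_eulerProd [Nonempty σ] {d : ℕ} (e : ℕ) {n k : ℕ} (hkn : k ≤ n) {A}
    (hA : A ∈ 𝓛 ^ d * 𝓗 ^ k)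
    (hker : ∀ m f, m ≤ n → n < m + e → MvPolynomial.IsHomogeneous f m → A f = 0) :
    A = 0 ∨ ∃ j, j + e = k ∧ A ∈ 𝓛 ^ d * 𝓗 ^ j * Submodule.span K {eulerProd σ K e (n : K)} := by
  induction e generalizing n k A with
  | zero => exact Or.inr ⟨k, rfl, Submodule.mem_mul_span_singleton.2 ⟨A, hA, mul_one A⟩⟩
  | succ e ih =>
    have hker_n : ∀ f : MvPolynomial σ K, f.IsHomogeneous n → A f = 0 :=
      fun f => hker n f le_rfl (by lia)
    cases k with
    | zero =>
      have hle : 𝓛 ^ d * 𝓗 ^ 0 ≤ 𝓜 * 𝓓 ^ 0 := by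
        rw [pow_zero, pow_zero]
        gcongr
        exact varMul_pow_le_polyMul d
      exact Or.inl (eq_zero_of_mem_polyMul_mul hkn (hle hA) hker_n)
    | succ k =>
      obtain ⟨B, hB, rfl⟩ := exists_eq_mul_euler_sub hkn hA hker_n
      obtain ⟨n, rfl⟩ : ∃ n', n = n' + 1 := ⟨n - 1, by lia⟩
      have hkerB : ∀ m f, m ≤ n → n < m + e → MvPolynomial.IsHomogeneous f m → B f = 0 := by
        intro m f hmn hnm hf
        have h := hker m f (by lia) (by lia) hf
        rw [Module.End.mul_apply, LinearMap.sub_apply, euler_apply_of_isHomogeneous hf,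
          Module.algebraMap_end_apply, ← Nat.cast_smul_eq_nsmul K, ← sub_smul, map_smul] at h
        exact (smul_eq_zero.1 h).resolve_left
          (sub_ne_zero.2 (Nat.cast_injective.ne (by lia)))
      rcases ih (by lia) hB hkerB with rfl | ⟨j, hj, hBj⟩
      · exact Or.inl (zero_mul _)
      · refine Or.inr ⟨j, by lia, ?_⟩
        obtain ⟨C, hC, rfl⟩ := Submodule.mem_mul_span_singleton.1 hBj
        refine Submodule.mem_mul_span_singleton.2 ⟨C, hC, ?_⟩
        rw [eulerProd, mul_assoc, Nat.cast_succ, add_sub_cancel_right]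

lemma mem_projectiveOps_pow_of_forall_apply_eq_zero [Nonempty σ] {d n k : ℕ} (hkn : k ≤ n) {A}
    (hA : A ∈ 𝓛 ^ d * 𝓗 ^ k)
    (hker : ∀ m f, m ≤ n → n < m + d → MvPolynomial.IsHomogeneous f m → A f = 0) :
    A ∈ projectiveOps σ K (n : K) ^ k := by
  rcases eq_zero_or_mem_mul_span_eulerProd d hkn hA hker with rfl | ⟨j, rfl, hAj⟩
  · exact zero_mem _
  · exact varMul_pow_mul_glOps_pow_mul_span_eulerProd_le d j (n : K) hAj

lemma mem_projectiveOps_pow_of_mem_iSup [Nonempty σ] {n k : ℕ} (hk : k ≤ n) {A}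
    (hA : A ∈ ⨆ d, 𝓛 ^ (d + 1) * 𝓗 ^ k)
    (hpres : A ∈ (restrictTotalDegree σ K n).compatibleMaps (restrictTotalDegree σ K n)) :
    A ∈ projectiveOps σ K (n : K) ^ k := by
  obtain ⟨t, ht, rfl⟩ := (Submodule.mem_iSup_iff_exists_finsupp _ _).1 hA
  have hcomp {m : ℕ} {f : MvPolynomial σ K} (hf : f.IsHomogeneous m) (d : ℕ) :
      homogeneousComponent (m + (d + 1)) ((t.sum fun _ s => s) f) = t d f := by
    have htf (e : ℕ) : t e f ∈ 𝓡 (m + (e + 1)) :=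
      varMul_pow_mul_glOps_pow_le_compatibleMaps (e + 1) k m (ht e) hf
    rw [Finsupp.sum, LinearMap.sum_apply, map_sum, Finset.sum_eq_single d]
    · rw [homogeneousComponent_of_mem (htf d), if_pos rfl]
    · intro e _ hed
      rw [homogeneousComponent_of_mem (htf e), if_neg (by lia)]
    · intro hd
      rw [Finsupp.notMem_support_iff.1 hd, LinearMap.zero_apply, map_zero]
  refine sum_mem fun d _ => mem_projectiveOps_pow_of_forall_apply_eq_zero hk (ht d)
    fun m f hmn hnm hf => ?_
  have hdeg : ((t.sum fun _ s => s) f).totalDegree ≤ n := by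
    rw [← mem_restrictTotalDegree]
    exact hpres ((mem_restrictTotalDegree σ n f).2 (hf.totalDegree_le.trans hmn))
  rw [← hcomp hf d, homogeneousComponent_eq_zero _ _ (hdeg.trans_lt hnm)]

end CharZero

end PolyDiffOp

open PolyDiffOp

lemma Tmod_eq_restrictTotalDegree (n : ℕ) : Tmod n = restrictTotalDegree (Fin 2) ℂ n := by
  refine le_antisymm (Submodule.span_le.2 ?_) fun p hp => ?_
  · rintro _ ⟨i, j, hij, rfl⟩
    rw [SetLike.mem_coe, mem_restrictTotalDegree]
    have hhom : (Xv ^ i * Yv ^ j).IsHomogeneous (i + j) :=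
      (isHomogeneous_X_pow 0 i).mul (isHomogeneous_X_pow 1 j)
    exact hhom.totalDegree_le.trans hij
  · rw [mem_restrictTotalDegree] at hp
    rw [← support_sum_monomial_coeff p]
    refine sum_mem fun s hs => ?_
    have hs' : s 0 + s 1 ≤ n := by
      simpa [Finsupp.sum_fintype] using (le_totalDegree hs).trans hp
    rw [monomial_eq, Finsupp.prod_pow, Fin.prod_univ_two, ← smul_eq_C_mul]
    exact Submodule.smul_mem _ _ (Submodule.subset_span ⟨s 0, s 1, hs', rfl⟩)

lemma sum_tIdx_mem_diffOpsLE (k : ℕ) (f : ℕ × ℕ → R2) :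
    ∑ ij ∈ tIdx k, Mf (f ij) * Dx ^ ij.1 * Dy ^ ij.2 ∈ diffOpsLE (Fin 2) ℂ k := by
  refine sum_mem fun ij hij => mulLeft_mul_mem_diffOpsLE (Finset.mem_filter.1 hij).2 (f ij) ?_ ?_
  · exact Submodule.pow_mem_pow _ (pderiv_mem_partials 0) _
  · exact Submodule.pow_mem_pow _ (pderiv_mem_partials 1) _

open scoped Pointwise in
lemma span_insert_one_pow_le_span_prodsLE (S : Set (Module.End ℂ R2)) (k : ℕ) :
    Submodule.span ℂ (insert 1 S) ^ k ≤ Submodule.span ℂ (prodsLE k S) := by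
  rw [Submodule.span_pow]
  refine Submodule.span_mono ?_
  induction k with
  | zero =>
    rintro _ rfl
    exact ⟨[], by simp⟩
  | succ k ih =>
    rw [pow_succ']
    rintro _ ⟨A, hA, B, hB, rfl⟩
    obtain ⟨l, hlk, hlS, rfl⟩ := ih hB
    rcases hA with rfl | hA
    · exact ⟨l, by lia, hlS, (one_mul _).symm⟩
    · exact ⟨A :: l, by simpa using hlk, by simpa [hA] using hlS, List.prod_cons⟩

lemma J1_eq_mulLeft_mul_euler_sub (a : ℂ) :
    J1 a = LinearMap.mulLeft ℂ (X 0) * (euler (Fin 2) ℂ - algebraMap ℂ _ a) := by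
  refine LinearMap.ext fun p => ?_
  simp only [J1, euler, Mf, Dx, Dy, Xv, Yv, Fin.sum_univ_two, Module.End.mul_apply,
    LinearMap.sub_apply, LinearMap.add_apply, LinearMap.smul_apply, LinearMap.mulLeft_apply,
    Module.algebraMap_end_apply, smul_eq_C_mul]
  ring

lemma J2_eq_mulLeft_mul_euler_sub (a : ℂ) :
    J2 a = LinearMap.mulLeft ℂ (X 1) * (euler (Fin 2) ℂ - algebraMap ℂ _ a) := by
  refine LinearMap.ext fun p => ?_
  simp only [J2, euler, Mf, Dx, Dy, Xv, Yv, Fin.sum_univ_two, Module.End.mul_apply,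
    LinearMap.sub_apply, LinearMap.add_apply, LinearMap.smul_apply, LinearMap.mulLeft_apply,
    Module.algebraMap_end_apply, smul_eq_C_mul]
  ring

section Generators

local notation "𝓙" a:max => Submodule.span ℂ (insert 1 {J1 a, J2 a, J3, J4, J5, J6, J7 a, J8 a})

lemma pderiv_mem_span_generators (a : ℂ) (i : Fin 2) : (pderiv i).toLinearMap ∈ 𝓙 a := by
  fin_cases i
  · exact Submodule.subset_span (by simp [J4, Dx])
  · exact Submodule.subset_span (by simp [J5, Dy])

lemma mulLeft_X_mul_pderiv_mem_span_generators (a : ℂ) (i j : Fin 2) :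
    LinearMap.mulLeft ℂ (X i) * (pderiv j).toLinearMap ∈ 𝓙 a := by
  have hJ {A} (hA : A ∈ insert 1 {J1 a, J2 a, J3, J4, J5, J6, J7 a, J8 a}) : A ∈ 𝓙 a :=
    Submodule.subset_span hA
  have hone : 1 ∈ 𝓙 a := hJ (by simp)
  have hxDx : Mf Xv * Dx ∈ 𝓙 a := by
    have h := add_mem (hJ (A := J7 a) (by simp)) (Submodule.smul_mem _ (a / 3) hone)
    rwa [J7, sub_add_cancel] at h
  have hyDy : Mf Yv * Dy ∈ 𝓙 a := by
    have h := add_mem (hJ (A := J8 a) (by simp)) (Submodule.smul_mem _ (a / 3) hone)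
    rwa [J8, sub_add_cancel] at h
  fin_cases i <;> fin_cases j
  exacts [hxDx, hJ (A := J6) (by simp), hJ (A := J3) (by simp), hyDy]

lemma mulLeft_X_mul_euler_sub_mem_span_generators (a : ℂ) (i : Fin 2) :
    LinearMap.mulLeft ℂ (X i) * (euler (Fin 2) ℂ - algebraMap ℂ _ a) ∈ 𝓙 a := by
  fin_cases i
  · exact J1_eq_mulLeft_mul_euler_sub a ▸ Submodule.subset_span (by simp)
  · exact J2_eq_mulLeft_mul_euler_sub a ▸ Submodule.subset_span (by simp)

lemma projectiveOps_le_span_generators (a : ℂ) : projectiveOps (Fin 2) ℂ a ≤ 𝓙 a := by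
  refine sup_le (sup_le (sup_le (Submodule.one_le.2 (Submodule.subset_span (by simp))) ?_) ?_) ?_
  · rw [varMul, partials, Submodule.span_mul_span, Submodule.span_le]
    rintro _ ⟨_, ⟨i, rfl⟩, _, ⟨j, rfl⟩, rfl⟩
    exact mulLeft_X_mul_pderiv_mem_span_generators a i j
  · rw [partials, Submodule.span_le]
    rintro _ ⟨i, rfl⟩
    exact pderiv_mem_span_generators a i
  · rw [varMul, Submodule.span_mul_span, Submodule.span_le]
    rintro _ ⟨_, ⟨i, rfl⟩, _, rfl, rfl⟩
    exact mulLeft_X_mul_euler_sub_mem_span_generators a i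

end Generators

lemma projectiveOps_pow_le_span_prodsLE (a : ℂ) (k : ℕ) :
    projectiveOps (Fin 2) ℂ a ^ k ≤
      Submodule.span ℂ (prodsLE k {J1 a, J2 a, J3, J4, J5, J6, J7 a, J8 a}) :=
  (pow_le_pow_left' (projectiveOps_le_span_generators a) k).trans
    (span_insert_one_pow_le_span_prodsLE _ k)

theorem stmt8_general {σ K : Type*} [Fintype σ] [Nonempty σ] [Field K] [CharZero K] {n k : ℕ}
    (hk : k ≤ n) {T : Module.End K (MvPolynomial σ K)} (hT : T ∈ diffOpsLE σ K k)
    (hpres : ∀ p ∈ restrictTotalDegree σ K n, T p ∈ restrictTotalDegree σ K n) :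
    T ∈ projectiveOps σ K (n : K) ^ k := by
  obtain ⟨A, hA, B, hB, rfl⟩ := Submodule.mem_sup.1 (diffOpsLE_le_sup k hT)
  have hABpres :
      A + B ∈ (restrictTotalDegree σ K n).compatibleMaps (restrictTotalDegree σ K n) := hpres
  have hBpres := sub_mem hABpres (affineOps_pow_le_compatibleMaps n k hA)
  rw [add_sub_cancel_left] at hBpres
  exact add_mem (pow_le_pow_left' (affineOps_le_projectiveOps _) k hA)
    (mem_projectiveOps_pow_of_mem_iSup hk hB hBpres)

theorem stmt8 (n k : ℕ) (hk : k ≤ n) (f : ℕ × ℕ → R2) (T : Module.End ℂ R2)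
    (hT : T = ∑ ij ∈ tIdx k, Mf (f ij) * Dx ^ ij.1 * Dy ^ ij.2)
    (hpres : ∀ P ∈ Tmod n, T P ∈ Tmod n) :
    T ∈ Submodule.span ℂ (prodsLE k
      ({J1 n, J2 n, J3, J4, J5, J6, J7 n, J8 n} : Set (Module.End ℂ R2))) := by
  rw [Tmod_eq_restrictTotalDegree] at hpres
  exact projectiveOps_pow_le_span_prodsLE n k
    (stmt8_general hk (hT ▸ sum_tIdx_mem_diffOpsLE k f) hpres)
end
end

section
/- Let p = 2, q = 1, r = 2, and set T = M_{x⁴} ∘ D_x ∘ D_x − 2·M_{x³} ∘ D_x − 2·M_{x²y} ∘ D_y + 2·M_{x²} (an endomorphism of R). Then T preserves 𝒮²_{2,1} (the ℂ-span of {1, x, x², y}), but T is not an element of the unital ℂ-subalgebra of End(R) generated by {W¹, W², W³, W⁴, W⁵, W⁶, W⁷} (with parameter p = 2); that is, T cannot be written as a polynomial in the generators of 𝔤^{24,2}_2. -/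
noncomputable section

open MvPolynomial

/-- `W¹ = D_x`. -/
def W1 : Module.End ℂ R2 := Dx

/-- `W² = M_{x²}∘D_x + r·M_{xy}∘D_y − p·M_x`. -/
def W2 (r p : ℕ) : Module.End ℂ R2 :=
  Mf (Xv ^ 2) * Dx + (r : ℂ) • (Mf (Xv * Yv) * Dy) - (p : ℂ) • Mf Xv

/-- `W³ = M_x∘D_x − (p/2)·id`. -/
def W3 (p : ℕ) : Module.End ℂ R2 := Mf Xv * Dx - ((p : ℂ) / 2) • 1

/-- `W⁴ = M_y∘D_y`. -/
def W4 : Module.End ℂ R2 := Mf Yv * Dy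

/-- `W^{5+i} = M_{xⁱ}∘D_y`. -/
def W5i (i : ℕ) : Module.End ℂ R2 := Mf (Xv ^ i) * Dy

/-- The generating set `{W¹, …, W^{5+r}}` of the realization `𝔤^{24,r}_p`. -/
def Wset (r p : ℕ) : Set (Module.End ℂ R2) :=
  {W1, W2 r p, W3 p, W4} ∪ {T | ∃ i ≤ r, T = W5i i}

/-! The elements of an associative algebra on which `ad w` is nilpotent form a subalgebra, by the
Leibniz rule. For `w = W²` it contains all the generators, because `ad W²` maps

  `W¹ ↦ -2 W³ - r W⁴`, `W³ ↦ -W²`, `W² ↦ 0`, `W⁴ ↦ 0`, `W⁵⁺ⁱ ↦ (i - r) W⁵⁺ⁱ⁺¹`.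

It does not contain `T`. On `ℂ[x] y`, `T` acts as `(W²)² - 4 x W²`, and while `ad W²` kills `W²`,
its `n`-th power sends multiplication by `x` to multiplication by `n! xⁿ⁺¹`. So `ad W²` is not
nilpotent on `T`. -/

section EngelSubalgebra

attribute [local instance] LieRing.ofAssociativeRing

variable {R A : Type*} [CommRing R] [Ring A] [Algebra R A]

theorem lie_mul (w a b : A) : ⁅w, a * b⁆ = ⁅w, a⁆ * b + a * ⁅w, b⁆ := by
  simp only [Ring.lie_def]
  noncomm_ring

variable (R A) in
/-- Multiplication of an associative algebra, as a morphism of modules over its commutator Lie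
algebra. -/
def mulLieHom : TensorProduct R A A →ₗ⁅R, A⁆ A :=
  TensorProduct.LieModule.liftLie R A A A A
    { LinearMap.mul R A with
      map_lie' := fun {w a} => by
        ext b
        simp [LieHom.lie_apply, lie_mul] }

theorem mulLieHom_tmul (a b : A) : mulLieHom R A (a ⊗ₜ[R] b) = a * b := by
  simp [mulLieHom, TensorProduct.LieModule.liftLie_apply]

variable (R) in
/-- The Engel subalgebra of an element `w` of an associative algebra: the elements killed by some
power of `ad w`. By the Leibniz rule it is closed under multiplication, not only under
commutators. -/
def engelSubalgebra (w : A) : Subalgebra R A where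
  __ := LieSubalgebra.engel R w
  mul_mem' {a b} ha hb := by
    have h := LieModule.weight_vector_multiplication A A A (mulLieHom R A) 0 0 w
      ⟨⟨a, ha⟩ ⊗ₜ[R] ⟨b, hb⟩, rfl⟩
    rw [add_zero] at h
    exact h
  algebraMap_mem' c := (LieSubalgebra.mem_engel_iff R w _).mpr
    ⟨1, by rw [pow_one, LieAlgebra.ad_apply, Ring.lie_def, Algebra.commutes, sub_self]⟩

theorem mem_engelSubalgebra_iff {w a : A} :
    a ∈ engelSubalgebra R w ↔ ∃ n : ℕ, (LieAlgebra.ad R A w ^ n) a = 0 :=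
  LieSubalgebra.mem_engel_iff R w a

theorem self_mem_engelSubalgebra (w : A) : w ∈ engelSubalgebra R w :=
  LieSubalgebra.self_mem_engel R w

theorem mem_engelSubalgebra_of_lie_mem {w a : A} (h : ⁅w, a⁆ ∈ engelSubalgebra R w) :
    a ∈ engelSubalgebra R w := by
  obtain ⟨n, hn⟩ := mem_engelSubalgebra_iff.mp h
  exact mem_engelSubalgebra_iff.mpr ⟨n + 1, hn⟩

theorem mem_engelSubalgebra_of_commute {w a : A} (h : Commute w a) : a ∈ engelSubalgebra R w :=
  mem_engelSubalgebra_of_lie_mem <| h.lie_eq ▸ zero_mem _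

theorem ad_pow_mul_of_commute {w b : A} (h : Commute w b) (a : A) (n : ℕ) :
    (LieAlgebra.ad R A w ^ n) (a * b) = (LieAlgebra.ad R A w ^ n) a * b := by
  induction n with
  | zero => rfl
  | succ n ih =>
    rw [pow_succ', Module.End.mul_apply, ih, Module.End.mul_apply, LieAlgebra.ad_apply,
      LieAlgebra.ad_apply, lie_mul, h.lie_eq, mul_zero, add_zero]

end EngelSubalgebra

theorem linearMap_ext_Xv_pow_mul_Yv_pow {M : Type*} [AddCommMonoid M] [Module ℂ M]
    {f g : R2 →ₗ[ℂ] M} (h : ∀ a b : ℕ, f (Xv ^ a * Yv ^ b) = g (Xv ^ a * Yv ^ b)) : f = g := by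
  refine (basisMonomials (Fin 2) ℂ).ext fun s => ?_
  have hs : basisMonomials (Fin 2) ℂ s = Xv ^ s 0 * Yv ^ s 1 := by
    simp [Xv, Yv, monomial_eq, Finsupp.prod_fintype]
  rw [hs, h]

theorem Mf_apply (f g : R2) : Mf f g = f * g := rfl

theorem Dx_Xv_pow_mul_Yv_pow (a b : ℕ) :
    Dx (Xv ^ a * Yv ^ b) = (a : ℂ) • (Xv ^ (a - 1) * Yv ^ b) := by
  change pderiv 0 (X 0 ^ a * X 1 ^ b) = (a : ℂ) • (X 0 ^ (a - 1) * X 1 ^ b)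
  rw [pderiv_mul, pderiv_pow, pderiv_pow, pderiv_X_self, pderiv_X_of_ne one_ne_zero, mul_one,
    mul_zero, mul_zero, add_zero, mul_assoc, Nat.cast_smul_eq_nsmul, nsmul_eq_mul]

theorem Dy_Xv_pow_mul_Yv_pow (a b : ℕ) :
    Dy (Xv ^ a * Yv ^ b) = (b : ℂ) • (Xv ^ a * Yv ^ (b - 1)) := by
  change pderiv 1 (X 0 ^ a * X 1 ^ b) = (b : ℂ) • (X 0 ^ a * X 1 ^ (b - 1))
  rw [pderiv_mul, pderiv_pow, pderiv_pow, pderiv_X_self, pderiv_X_of_ne zero_ne_one, mul_one,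
    mul_zero, zero_mul, zero_add, mul_left_comm, Nat.cast_smul_eq_nsmul, nsmul_eq_mul]

theorem Xv_mul_Dx_Xv_pow_mul_Yv_pow (a b : ℕ) :
    Xv * Dx (Xv ^ a * Yv ^ b) = (a : ℂ) • (Xv ^ a * Yv ^ b) := by
  rw [Dx_Xv_pow_mul_Yv_pow, mul_smul_comm, ← mul_assoc]
  cases a <;> simp [pow_succ']

theorem Yv_mul_Dy_Xv_pow_mul_Yv_pow (a b : ℕ) :
    Yv * Dy (Xv ^ a * Yv ^ b) = (b : ℂ) • (Xv ^ a * Yv ^ b) := by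
  rw [Dy_Xv_pow_mul_Yv_pow, mul_smul_comm, mul_left_comm]
  cases b <;> simp [pow_succ']

theorem W1_Xv_pow_mul_Yv_pow (a b : ℕ) :
    W1 (Xv ^ a * Yv ^ b) = (a : ℂ) • (Xv ^ (a - 1) * Yv ^ b) :=
  Dx_Xv_pow_mul_Yv_pow a b

theorem W2_Xv_pow_mul_Yv_pow (r p a b : ℕ) :
    W2 r p (Xv ^ a * Yv ^ b) = ((a : ℂ) + r * b - p) • (Xv ^ (a + 1) * Yv ^ b) := by
  have factor : W2 r p (Xv ^ a * Yv ^ b) =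
      Xv * (Xv * Dx (Xv ^ a * Yv ^ b) + (r : ℂ) • (Yv * Dy (Xv ^ a * Yv ^ b))
        - (p : ℂ) • (Xv ^ a * Yv ^ b)) := by
    simp only [W2, LinearMap.sub_apply, LinearMap.add_apply, LinearMap.smul_apply,
      Module.End.mul_apply, Mf_apply, smul_eq_C_mul]
    ring
  rw [factor, Xv_mul_Dx_Xv_pow_mul_Yv_pow, Yv_mul_Dy_Xv_pow_mul_Yv_pow, smul_smul, ← add_smul,
    ← sub_smul, mul_smul_comm, ← mul_assoc, ← pow_succ']

theorem W3_Xv_pow_mul_Yv_pow (p a b : ℕ) :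
    W3 p (Xv ^ a * Yv ^ b) = ((a : ℂ) - p / 2) • (Xv ^ a * Yv ^ b) := by
  rw [W3, LinearMap.sub_apply, Module.End.mul_apply, Mf_apply, Xv_mul_Dx_Xv_pow_mul_Yv_pow,
    LinearMap.smul_apply, Module.End.one_apply, sub_smul]

theorem W4_Xv_pow_mul_Yv_pow (a b : ℕ) :
    W4 (Xv ^ a * Yv ^ b) = (b : ℂ) • (Xv ^ a * Yv ^ b) :=
  Yv_mul_Dy_Xv_pow_mul_Yv_pow a b

theorem W5i_Xv_pow_mul_Yv_pow (i a b : ℕ) :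
    W5i i (Xv ^ a * Yv ^ b) = (b : ℂ) • (Xv ^ (a + i) * Yv ^ (b - 1)) := by
  rw [W5i, Module.End.mul_apply, Dy_Xv_pow_mul_Yv_pow, map_smul, Mf_apply, ← mul_assoc, ← pow_add,
    add_comm]

theorem lie_W2_W1 (r p : ℕ) : ⁅W2 r p, W1⁆ = (-2 : ℂ) • W3 p - (r : ℂ) • W4 := by
  refine linearMap_ext_Xv_pow_mul_Yv_pow fun a b => ?_
  simp only [Ring.lie_def, LinearMap.sub_apply, Module.End.mul_apply, LinearMap.smul_apply,
    W1_Xv_pow_mul_Yv_pow, W2_Xv_pow_mul_Yv_pow, W3_Xv_pow_mul_Yv_pow, W4_Xv_pow_mul_Yv_pow,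
    map_smul, Nat.add_sub_cancel]
  cases a with
  | zero => module
  | succ a =>
    rw [Nat.add_sub_cancel]
    push_cast
    module

theorem lie_W2_W3 (r p : ℕ) : ⁅W2 r p, W3 p⁆ = -W2 r p := by
  refine linearMap_ext_Xv_pow_mul_Yv_pow fun a b => ?_
  simp only [Ring.lie_def, LinearMap.sub_apply, Module.End.mul_apply, LinearMap.neg_apply,
    W2_Xv_pow_mul_Yv_pow, W3_Xv_pow_mul_Yv_pow, map_smul]
  push_cast
  module

theorem commute_W2_W4 (r p : ℕ) : Commute (W2 r p) W4 := by
  refine linearMap_ext_Xv_pow_mul_Yv_pow fun a b => ?_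
  simp only [Module.End.mul_apply, W2_Xv_pow_mul_Yv_pow, W4_Xv_pow_mul_Yv_pow, map_smul]
  module

theorem lie_W2_W5i (r p i : ℕ) : ⁅W2 r p, W5i i⁆ = ((i : ℂ) - r) • W5i (i + 1) := by
  refine linearMap_ext_Xv_pow_mul_Yv_pow fun a b => ?_
  simp only [Ring.lie_def, LinearMap.sub_apply, Module.End.mul_apply, LinearMap.smul_apply,
    W2_Xv_pow_mul_Yv_pow, W5i_Xv_pow_mul_Yv_pow, map_smul]
  rw [add_right_comm a 1 i, ← add_assoc]
  cases b with
  | zero => module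
  | succ b =>
    rw [Nat.add_sub_cancel]
    push_cast
    module

theorem lie_W2_Mf_Xv_pow (r p k : ℕ) :
    ⁅W2 r p, Mf (Xv ^ k)⁆ = (k : ℂ) • Mf (Xv ^ (k + 1)) := by
  refine linearMap_ext_Xv_pow_mul_Yv_pow fun a b => ?_
  simp only [Ring.lie_def, LinearMap.sub_apply, Module.End.mul_apply, LinearMap.smul_apply,
    W2_Xv_pow_mul_Yv_pow, Mf_apply, mul_smul_comm, ← mul_assoc, ← pow_add]
  rw [show k + (a + 1) = k + a + 1 by ring, show k + 1 + a = k + a + 1 by ring]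
  push_cast
  module

theorem W5i_mem_engelSubalgebra_W2 {r i : ℕ} (p : ℕ) (hi : i ≤ r) :
    W5i i ∈ engelSubalgebra ℂ (W2 r p) := by
  induction hi using Nat.decreasingInduction with
  | self =>
    refine mem_engelSubalgebra_of_lie_mem ?_
    rw [lie_W2_W5i, sub_self, zero_smul]
    exact zero_mem _
  | of_succ i _ ih =>
    refine mem_engelSubalgebra_of_lie_mem ?_
    rw [lie_W2_W5i]
    exact Subalgebra.smul_mem _ ih _

theorem adjoin_Wset_le_engelSubalgebra_W2 (r p : ℕ) :
    Algebra.adjoin ℂ (Wset r p) ≤ engelSubalgebra ℂ (W2 r p) := by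
  have W2_mem : W2 r p ∈ engelSubalgebra ℂ (W2 r p) := self_mem_engelSubalgebra _
  have W3_mem : W3 p ∈ engelSubalgebra ℂ (W2 r p) := mem_engelSubalgebra_of_lie_mem <| by
    rw [lie_W2_W3]
    exact neg_mem W2_mem
  have W4_mem : W4 ∈ engelSubalgebra ℂ (W2 r p) :=
    mem_engelSubalgebra_of_commute (commute_W2_W4 r p)
  have W1_mem : W1 ∈ engelSubalgebra ℂ (W2 r p) := mem_engelSubalgebra_of_lie_mem <| by
    rw [lie_W2_W1]
    exact sub_mem (Subalgebra.smul_mem _ W3_mem _) (Subalgebra.smul_mem _ W4_mem _)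
  rw [Algebra.adjoin_le_iff]
  rintro _ ((rfl | rfl | rfl | rfl) | ⟨i, hi, rfl⟩)
  exacts [W1_mem, W2_mem, W3_mem, W4_mem, W5i_mem_engelSubalgebra_W2 p hi]

/-- The obstruction `x W² W⁴ - x² ((W⁴)² - W⁴)` to membership in the Engel subalgebra of `W²`: for
`r = p = 2` the operator `T` is `(W²)²` minus four times this one. With `s = a + 2b - 2`, this is
the identity `(a - 1)(a - 2) - 2b = s(s + 1) - 4(sb - b(b - 1))` between the coefficients by which
the operators send `xᵃyᵇ` to multiples of `xᵃ⁺²yᵇ`. -/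
def nonEngelPart (r p : ℕ) : Module.End ℂ R2 :=
  Mf Xv * (W2 r p * W4) - Mf (Xv ^ 2) * (W4 * W4 - W4)

section NonEngelPart

attribute [local instance] LieRing.ofAssociativeRing

theorem ad_W2_pow_Mf_Xv_pow (r p k n : ℕ) :
    (LieAlgebra.ad ℂ (Module.End ℂ R2) (W2 r p) ^ n) (Mf (Xv ^ k)) =
      (k.ascFactorial n : ℂ) • Mf (Xv ^ (k + n)) := by
  induction n with
  | zero => simp
  | succ n ih =>
    rw [pow_succ', Module.End.mul_apply, ih, map_smul, LieAlgebra.ad_apply, lie_W2_Mf_Xv_pow,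
      smul_smul, Nat.ascFactorial_succ, add_assoc, Nat.cast_mul, mul_comm]

theorem ad_W2_pow_nonEngelPart (r p n : ℕ) :
    (LieAlgebra.ad ℂ (Module.End ℂ R2) (W2 r p) ^ n) (nonEngelPart r p) =
      (n.factorial : ℂ) • (Mf (Xv ^ (1 + n)) * (W2 r p * W4))
        - (Nat.ascFactorial 2 n : ℂ) • (Mf (Xv ^ (2 + n)) * (W4 * W4 - W4)) := by
  have comm_W4 := commute_W2_W4 r p
  have comm_left : Commute (W2 r p) (W2 r p * W4) := (Commute.refl _).mul_right comm_W4
  have comm_right : Commute (W2 r p) (W4 * W4 - W4) :=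
    (comm_W4.mul_right comm_W4).sub_right comm_W4
  rw [nonEngelPart, map_sub, ad_pow_mul_of_commute comm_left, ad_pow_mul_of_commute comm_right,
    ← pow_one Xv, ← pow_mul, ad_W2_pow_Mf_Xv_pow, ad_W2_pow_Mf_Xv_pow, Nat.one_ascFactorial,
    smul_mul_assoc, smul_mul_assoc]
  simp only [one_mul, pow_one]

theorem ad_W2_pow_nonEngelPart_Xv_pow_mul_Yv (r p n a : ℕ) :
    (LieAlgebra.ad ℂ (Module.End ℂ R2) (W2 r p) ^ n) (nonEngelPart r p) (Xv ^ a * Yv ^ 1) =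
      (n.factorial * ((a : ℂ) + r - p)) • (Xv ^ (a + n + 2) * Yv ^ 1) := by
  rw [ad_W2_pow_nonEngelPart]
  simp only [LinearMap.sub_apply, LinearMap.smul_apply, Module.End.mul_apply, map_smul,
    W4_Xv_pow_mul_Yv_pow, W2_Xv_pow_mul_Yv_pow, Nat.cast_one, one_smul, mul_one, Mf_apply,
    sub_self, mul_zero, smul_zero, sub_zero, ← mul_assoc, ← pow_add, smul_smul]
  rw [show 1 + n + (a + 1) = a + n + 2 by ring]

theorem nonEngelPart_notMem_engelSubalgebra_W2 (r p : ℕ) :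
    nonEngelPart r p ∉ engelSubalgebra ℂ (W2 r p) := by
  intro h
  obtain ⟨n, hn⟩ := mem_engelSubalgebra_iff.mp h
  have h_eval := ad_W2_pow_nonEngelPart_Xv_pow_mul_Yv r p n (p + 1)
  have h_coeff : (n.factorial : ℂ) * (((p + 1 : ℕ) : ℂ) + r - p) ≠ 0 := by
    rw [show ((p + 1 : ℕ) : ℂ) + r - p = ((r + 1 : ℕ) : ℂ) by push_cast; ring]
    exact mul_ne_zero (Nat.cast_ne_zero.mpr n.factorial_ne_zero)
      (Nat.cast_ne_zero.mpr r.succ_ne_zero)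
  have h_monomial : Xv ^ (p + 1 + n + 2) * Yv ^ 1 ≠ 0 :=
    mul_ne_zero (pow_ne_zero _ (X_ne_zero 0)) (pow_ne_zero _ (X_ne_zero 1))
  rw [hn, LinearMap.zero_apply] at h_eval
  exact smul_ne_zero h_coeff h_monomial h_eval.symm

end NonEngelPart

/-- The operator `T` of the theorem, which preserves `𝒮²_{2,1}` although it is not a polynomial in
the generators. -/
def exoticOp : Module.End ℂ R2 :=
  Mf (Xv ^ 4) * Dx * Dx - (2 : ℂ) • (Mf (Xv ^ 3) * Dx)
    - (2 : ℂ) • (Mf (Xv ^ 2 * Yv) * Dy) + (2 : ℂ) • Mf (Xv ^ 2)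

theorem Xv_sq_mul_Dx_Dx_Xv_pow_mul_Yv_pow (a b : ℕ) :
    Xv ^ 2 * Dx (Dx (Xv ^ a * Yv ^ b)) = ((a : ℂ) * (a - 1)) • (Xv ^ a * Yv ^ b) := by
  rw [Dx_Xv_pow_mul_Yv_pow, map_smul, Dx_Xv_pow_mul_Yv_pow, mul_smul_comm, mul_smul_comm,
    ← mul_assoc, ← pow_add, smul_smul]
  rcases a with _ | _ | a
  · simp
  · simp
  · simp [add_comm 2 a]

theorem exoticOp_Xv_pow_mul_Yv_pow (a b : ℕ) :
    exoticOp (Xv ^ a * Yv ^ b) =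
      (((a : ℂ) - 1) * (a - 2) - 2 * b) • (Xv ^ (a + 2) * Yv ^ b) := by
  set m := Xv ^ a * Yv ^ b with hm
  have factor : exoticOp m = Xv ^ 2 * (Xv ^ 2 * Dx (Dx m) - (2 : ℂ) • (Xv * Dx m)
      - (2 : ℂ) • (Yv * Dy m) + (2 : ℂ) • m) := by
    simp only [exoticOp, LinearMap.sub_apply, LinearMap.add_apply, LinearMap.smul_apply,
      Module.End.mul_apply, Mf_apply, smul_eq_C_mul]
    ring
  rw [factor, hm, Xv_sq_mul_Dx_Dx_Xv_pow_mul_Yv_pow, Xv_mul_Dx_Xv_pow_mul_Yv_pow,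
    Yv_mul_Dy_Xv_pow_mul_Yv_pow, smul_smul, smul_smul, ← sub_smul, ← sub_smul, ← add_smul,
    mul_smul_comm, ← mul_assoc, ← pow_add, add_comm 2 a]
  congr 1
  ring

theorem exoticOp_mem_Smod {v : R2} (hv : v ∈ Smod 2 2 1) : exoticOp v ∈ Smod 2 2 1 := by
  suffices h : Smod 2 2 1 ≤ (Smod 2 2 1).comap exoticOp from h hv
  refine Submodule.span_le.mpr ?_
  rintro _ ⟨a, b, hab, -, rfl⟩
  rw [SetLike.mem_coe, Submodule.mem_comap, exoticOp_Xv_pow_mul_Yv_pow]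
  have h_cases : (a = 0 ∧ b = 0) ∨ (a = 1 ∧ b = 0) ∨ (a = 2 ∧ b = 0) ∨ (a = 0 ∧ b = 1) := by
    lia
  rcases h_cases with ⟨rfl, rfl⟩ | ⟨rfl, rfl⟩ | ⟨rfl, rfl⟩ | ⟨rfl, rfl⟩
  · exact Submodule.smul_mem _ _ (Submodule.subset_span ⟨2, 0, le_rfl, zero_le_one, rfl⟩)
  all_goals simp

theorem exoticOp_eq_W2_sq_sub_nonEngelPart :
    exoticOp = W2 2 2 * W2 2 2 - (4 : ℂ) • nonEngelPart 2 2 := by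
  refine linearMap_ext_Xv_pow_mul_Yv_pow fun a b => ?_
  simp only [nonEngelPart, LinearMap.sub_apply, LinearMap.smul_apply, Module.End.mul_apply,
    exoticOp_Xv_pow_mul_Yv_pow, W2_Xv_pow_mul_Yv_pow, W4_Xv_pow_mul_Yv_pow, map_smul, Mf_apply,
    smul_sub, mul_sub]
  have h₁ : Xv * (Xv ^ (a + 1) * Yv ^ b) = Xv ^ (a + 2) * Yv ^ b := by ring
  have h₂ : Xv ^ 2 * (Xv ^ a * Yv ^ b) = Xv ^ (a + 2) * Yv ^ b := by ring
  rw [h₁, h₂]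
  push_cast
  module

theorem exoticOp_notMem_engelSubalgebra_W2 : exoticOp ∉ engelSubalgebra ℂ (W2 2 2) := by
  intro h
  refine nonEngelPart_notMem_engelSubalgebra_W2 2 2 ?_
  have W2_mem : W2 2 2 ∈ engelSubalgebra ℂ (W2 2 2) := self_mem_engelSubalgebra _
  have h_eq : nonEngelPart 2 2 = (4⁻¹ : ℂ) • (W2 2 2 * W2 2 2 - exoticOp) := by
    rw [exoticOp_eq_W2_sq_sub_nonEngelPart]
    module
  rw [h_eq]
  exact Subalgebra.smul_mem _ (sub_mem (mul_mem W2_mem W2_mem) h) _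

theorem stmt10 (T : Module.End ℂ R2)
    (hT : T = Mf (Xv ^ 4) * Dx * Dx - (2 : ℂ) • (Mf (Xv ^ 3) * Dx)
        - (2 : ℂ) • (Mf (Xv ^ 2 * Yv) * Dy) + (2 : ℂ) • Mf (Xv ^ 2)) :
    (∀ v ∈ Smod 2 2 1, T v ∈ Smod 2 2 1) ∧
    T ∉ Algebra.adjoin ℂ
      ({W1, W2 2 2, W3 2, W4, W5i 0, W5i 1, W5i 2} : Set (Module.End ℂ R2)) := by
  obtain rfl : T = exoticOp := hT
  refine ⟨fun v hv => exoticOp_mem_Smod hv, fun h => exoticOp_notMem_engelSubalgebra_W2 ?_⟩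
  have generators_subset :
      ({W1, W2 2 2, W3 2, W4, W5i 0, W5i 1, W5i 2} : Set (Module.End ℂ R2)) ⊆ Wset 2 2 := by
    rintro _ (rfl | rfl | rfl | rfl | rfl | rfl | rfl)
    exacts [by simp [Wset], by simp [Wset], by simp [Wset], by simp [Wset],
      .inr ⟨0, by simp, rfl⟩, .inr ⟨1, by simp, rfl⟩, .inr ⟨2, le_rfl, rfl⟩]
  exact adjoin_Wset_le_engelSubalgebra_W2 2 2 (Algebra.adjoin_mono generators_subset h)
end
end
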